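/- arXiv:1901.10790 — 5 statements merged into one kernel-verified Lean document; each statement's English description precedes it below -/
import Mathlib

section
/- There exists an absolute constant C > 0 with the following property. Let s₀ ∈ ℂ, r > 0, M > 1, and let f be a function analytic on the closed disc {s : |s − s₀| ≤ r} with f(s₀) ≠ 0 and |f(s)/f(s₀)| < e^M for all s in this disc. Then for every s with |s − s₀| ≤ (3/8)r at which f(s) ≠ 0, one has |(f(s₀)/f(s)) · ∏_ρ (s − ρ)/(s₀ − ρ)| < e^{CM}, where the product runs over the zeros ρ of f with |ρ − s₀| ≤ r/2, counted with multiplicity. -/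
/-- The Dirichlet series of the Lerch zeta-function, convergent for `1 < re s`. -/
noncomputable def lerchSeries (lam alp : ℝ) (s : ℂ) : ℂ :=
  ∑' m : ℕ, Complex.exp (2 * Real.pi * Complex.I * lam * m) / ((m : ℂ) + alp) ^ s

/-- `F` is the analytic continuation of the Lerch zeta-function with parameters `lam`, `alp`:
it is complex differentiable away from `1` and agrees with the Dirichlet series on `1 < re s`. -/
def IsLerch (lam alp : ℝ) (F : ℂ → ℂ) : Prop :=
  (∀ s : ℂ, s ≠ 1 → DifferentiableAt ℂ F s) ∧
  ∀ s : ℂ, 1 < s.re → F s = lerchSeries lam alp s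

open scoped Classical

/-- The multiplicity (order of vanishing) of `F` at `z` (junk value `0` if `F` is not
analytic at `z` or vanishes to infinite order). -/
noncomputable def zeroOrder (F : ℂ → ℂ) (z : ℂ) : ℕ :=
  if h : AnalyticAt ℂ F z then (analyticOrderAt F z).toNat else 0

open Complex Metric Topology

/-!
Dividing `f` by the product of `(s - ρ) ^ m(ρ)` over its zeros in the half disc leaves an analytic
`g` on the whole disc without zeros in the half disc. On the boundary circle every such zero is at
least as far from `s` as it is from `s₀`, so the division does not increase `|f (s) / f (s₀)|`
there, and by the maximum principle `|g (s) / g (s₀)| ≤ e ^ M` on the whole disc. On the half disc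
`g / g (s₀)` has a logarithm vanishing at `s₀` whose real part is at most `M`; the
Borel–Carathéodory theorem bounds its modulus, hence the modulus of `g (s₀) / g (s)`.
-/

section Factorization

variable {𝕜 E : Type*} [NontriviallyNormedField 𝕜] [NormedAddCommGroup E] [NormedSpace 𝕜 E]
  {U : Set 𝕜} {f : 𝕜 → E}

lemma exists_analyticOnNhd_eq_sub_pow_smul (hf : AnalyticOnNhd 𝕜 f U) {ρ : 𝕜} (hρ : ρ ∈ U)
    (hord : analyticOrderAt f ρ ≠ ⊤) :
    ∃ g : 𝕜 → E, AnalyticOnNhd 𝕜 g U ∧ g ρ ≠ 0 ∧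
      ∀ z, f z = (z - ρ) ^ analyticOrderNatAt f ρ • g z := by
  obtain ⟨g, hg, hgρ, hfg⟩ := (hf ρ hρ).analyticOrderAt_ne_top.1 hord
  set n := analyticOrderNatAt f ρ
  let G : 𝕜 → E := Function.update (fun z ↦ ((z - ρ) ^ n)⁻¹ • f z) ρ (g ρ)
  have hG_self : G ρ = g ρ := Function.update_self ..
  have hG_of_ne : ∀ z ≠ ρ, G z = ((z - ρ) ^ n)⁻¹ • f z := fun z hz ↦
    Function.update_of_ne hz ..
  have hpow : ∀ z ≠ ρ, (z - ρ) ^ n ≠ 0 := fun z hz ↦ pow_ne_zero n (sub_ne_zero.2 hz)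
  have hGg : G =ᶠ[𝓝 ρ] g := by
    filter_upwards [hfg] with z hz
    rcases eq_or_ne z ρ with rfl | hne
    · exact hG_self
    · rw [hG_of_ne z hne, hz, inv_smul_smul₀ (hpow z hne)]
  refine ⟨G, fun z hz ↦ ?_, hG_self ▸ hgρ, fun z ↦ ?_⟩
  · rcases eq_or_ne z ρ with rfl | hne
    · exact hg.congr hGg.symm
    · have hquot : AnalyticAt 𝕜 (fun w ↦ ((w - ρ) ^ n)⁻¹ • f w) z :=
        (((analyticAt_id.sub analyticAt_const).pow n).inv (hpow z hne)).smul (hf z hz)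
      refine hquot.congr ?_
      filter_upwards [isOpen_ne.mem_nhds hne] with w hw using (hG_of_ne w hw).symm
  · rcases eq_or_ne z ρ with rfl | hne
    · rw [hG_self]
      exact hfg.self_of_nhds
    · rw [hG_of_ne z hne, smul_inv_smul₀ (hpow z hne)]

lemma exists_analyticOnNhd_eq_prod_sub_pow_smul (hf : AnalyticOnNhd 𝕜 f U) (T : Finset 𝕜)
    (hTU : ∀ ρ ∈ T, ρ ∈ U) (hord : ∀ ρ ∈ T, analyticOrderAt f ρ ≠ ⊤) :
    ∃ g : 𝕜 → E, AnalyticOnNhd 𝕜 g U ∧ (∀ ρ ∈ T, g ρ ≠ 0) ∧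
      ∀ z, f z = (∏ ρ ∈ T, (z - ρ) ^ analyticOrderNatAt f ρ) • g z := by
  induction T using Finset.induction_on with
  | empty => exact ⟨f, hf, by simp, by simp⟩
  | insert a T ha ih =>
    rw [Finset.forall_mem_insert] at hTU hord
    obtain ⟨g, hg, hgT, hfg⟩ := ih hTU.2 hord.2
    set P : 𝕜 → 𝕜 := fun z ↦ ∏ ρ ∈ T, (z - ρ) ^ analyticOrderNatAt f ρ
    have hP : AnalyticAt 𝕜 P a := by fun_prop
    have hPa : P a ≠ 0 := Finset.prod_ne_zero_iff.2 fun ρ hρ ↦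
      pow_ne_zero _ (sub_ne_zero.2 (ne_of_mem_of_not_mem hρ ha).symm)
    have horder : analyticOrderAt f a = analyticOrderAt g a := by
      rw [show f = P • g from funext hfg, analyticOrderAt_smul hP (hg a hTU.1),
        hP.analyticOrderAt_eq_zero.2 hPa, zero_add]
    obtain ⟨G, hG, hGa, hgG⟩ := exists_analyticOnNhd_eq_sub_pow_smul hg hTU.1 (horder ▸ hord.1)
    refine ⟨G, hG, Finset.forall_mem_insert .. |>.2 ⟨hGa, fun ρ hρ hGρ ↦ hgT ρ hρ ?_⟩, fun z ↦ ?_⟩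
    · rw [hgG, hGρ, smul_zero]
    · rw [Finset.prod_insert ha, hfg z, hgG z, smul_smul, mul_comm, analyticOrderNatAt,
        analyticOrderNatAt, horder]

lemma finite_setOf_eq_zero_and_mem_of_isCompact {K : Set 𝕜} (hf : AnalyticOnNhd 𝕜 f U)
    (hU : IsPreconnected U) (hK : IsCompact K) (hKU : K ⊆ U) {x : 𝕜} (hx : x ∈ U)
    (hfx : f x ≠ 0) : {ρ | f ρ = 0 ∧ ρ ∈ K}.Finite := by
  by_contra hinf
  obtain ⟨y, hy, hacc⟩ :=
    Set.Infinite.exists_accPt_of_subset_isCompact hinf hK fun ρ hρ ↦ hρ.2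
  have hfreq : ∃ᶠ z in 𝓝[≠] y, f z = 0 :=
    (accPt_iff_frequently_nhdsNE.1 hacc).mono fun z hz ↦ hz.1
  exact hfx (hf.eqOn_zero_of_preconnected_of_frequently_eq_zero hU (hKU hy) hfreq hx)

end Factorization

section ZeroProduct

variable {f : ℂ → ℂ} {K : Set ℂ}

/-- The monic polynomial function whose zeros are those of `f` in `K`, with the multiplicities they
have for `f`. It is meaningful only if `f` has finitely many zeros in `K`: a `∏ᶠ` with infinitely
many nontrivial factors is `1`. -/
noncomputable def zeroProduct (f : ℂ → ℂ) (K : Set ℂ) (z : ℂ) : ℂ :=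
  ∏ᶠ ρ ∈ {ρ | f ρ = 0 ∧ ρ ∈ K}, (z - ρ) ^ zeroOrder f ρ

lemma zeroOrder_eq_analyticOrderNatAt (f : ℂ → ℂ) (z : ℂ) :
    zeroOrder f z = analyticOrderNatAt f z := by
  unfold zeroOrder
  split_ifs with h
  · rfl
  · exact (analyticOrderNatAt_of_not_analyticAt h).symm

lemma zeroProduct_eq_prod (hfin : {ρ | f ρ = 0 ∧ ρ ∈ K}.Finite) (z : ℂ) :
    zeroProduct f K z = ∏ ρ ∈ hfin.toFinset, (z - ρ) ^ zeroOrder f ρ :=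
  finprod_mem_eq_finite_toFinset_prod _ hfin

lemma finprod_mem_div_pow_zeroOrder (hfin : {ρ | f ρ = 0 ∧ ρ ∈ K}.Finite) (z w : ℂ) :
    ∏ᶠ ρ ∈ {ρ | f ρ = 0 ∧ ρ ∈ K}, ((z - ρ) / (w - ρ)) ^ zeroOrder f ρ =
      zeroProduct f K z / zeroProduct f K w := by
  simp only [div_pow]
  exact finprod_mem_div_distrib _ _ hfin

lemma norm_zeroProduct_le_norm_zeroProduct (hfin : {ρ | f ρ = 0 ∧ ρ ∈ K}.Finite) {z w : ℂ}
    (hdist : ∀ ρ ∈ K, dist z ρ ≤ dist w ρ) : ‖zeroProduct f K z‖ ≤ ‖zeroProduct f K w‖ := by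
  simp only [zeroProduct_eq_prod hfin, norm_prod, norm_pow, ← dist_eq_norm]
  gcongr with ρ hρ
  exact hdist ρ (hfin.mem_toFinset.1 hρ).2

lemma exists_analyticOnNhd_eq_zeroProduct_mul {U : Set ℂ} (hf : AnalyticOnNhd ℂ f U)
    (hU : IsPreconnected U) (hKU : K ⊆ U) (hfin : {ρ | f ρ = 0 ∧ ρ ∈ K}.Finite) {x : ℂ}
    (hx : x ∈ U) (hfx : f x ≠ 0) :
    ∃ g : ℂ → ℂ, AnalyticOnNhd ℂ g U ∧ (∀ z ∈ K, g z ≠ 0) ∧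
      ∀ z, f z = zeroProduct f K z * g z := by
  have hord : ∀ ρ ∈ U, analyticOrderAt f ρ ≠ ⊤ := fun ρ hρ ↦
    hf.analyticOrderAt_ne_top_of_isPreconnected hU hx hρ <| by
      rw [(hf x hx).analyticOrderAt_eq_zero.2 hfx]
      exact ENat.zero_ne_top
  have hTU : ∀ ρ ∈ hfin.toFinset, ρ ∈ U := fun ρ hρ ↦ hKU (hfin.mem_toFinset.1 hρ).2
  obtain ⟨g, hg, hgT, hfg⟩ :=
    exists_analyticOnNhd_eq_prod_sub_pow_smul hf hfin.toFinset hTU fun ρ hρ ↦ hord ρ (hTU ρ hρ)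
  simp only [smul_eq_mul] at hfg
  refine ⟨g, hg, fun z hz hgz ↦ ?_, fun z ↦ ?_⟩
  · have hfz : f z = 0 := by rw [hfg, hgz, mul_zero]
    exact hgT z (hfin.mem_toFinset.2 ⟨hfz, hz⟩) hgz
  · simp only [zeroProduct_eq_prod hfin, zeroOrder_eq_analyticOrderNatAt, ← hfg]

end ZeroProduct

section NonvanishingOnBall

variable {F : ℂ → ℂ} {c : ℂ} {R : ℝ}

lemma exists_differentiableOn_exp_eq (hF : DifferentiableOn ℂ F (ball c R))
    (hne : ∀ z ∈ ball c R, F z ≠ 0) {w : ℂ} (hw : exp w = F c) :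
    ∃ h : ℂ → ℂ, DifferentiableOn ℂ h (ball c R) ∧ h c = w ∧ ∀ z ∈ ball c R, exp (h z) = F z := by
  obtain ⟨h, hc, hderiv⟩ :=
    ((hF.deriv isOpen_ball).div hF hne).isExactOn_ball.with_val_at c w
  refine ⟨h, fun z hz ↦ (hderiv z hz).differentiableAt.differentiableWithinAt, hc, fun z hz ↦ ?_⟩
  have hquot : ∀ u ∈ ball c R, HasDerivAt (fun v ↦ exp (h v) / F v) 0 u := fun u hu ↦ by
    have hFu := (hF.differentiableAt (isOpen_ball.mem_nhds hu)).hasDerivAt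
    refine ((hderiv u hu).cexp.div hFu (hne u hu)).congr_deriv ?_
    have hFu₀ := hne u hu
    simp only [Pi.div_apply]
    field_simp
    ring
  have hconst : exp (h z) / F z = exp (h c) / F c :=
    isOpen_ball.is_const_of_deriv_eq_zero (convex_ball c R).isPreconnected
      (fun u hu ↦ (hquot u hu).differentiableAt.differentiableWithinAt)
      (fun u hu ↦ (hquot u hu).deriv) hz (mem_ball_self (pos_of_mem_ball hz))
  rw [hc, hw, div_self (hw ▸ exp_ne_zero w)] at hconst
  exact (div_eq_one_iff_eq (hne z hz)).1 hconst

lemma norm_div_le_exp_of_ne_zero {M : ℝ} (hM : 0 < M) (hF : DifferentiableOn ℂ F (ball c R))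
    (hne : ∀ z ∈ ball c R, F z ≠ 0) (hbound : ∀ z ∈ ball c R, ‖F z / F c‖ ≤ Real.exp M) {z : ℂ}
    (hz : z ∈ ball c R) : ‖F c / F z‖ ≤ Real.exp (2 * M * dist z c / (R - dist z c)) := by
  have hR : 0 < R := pos_of_mem_ball hz
  have hFc : F c ≠ 0 := hne c (mem_ball_self hR)
  obtain ⟨h, hh, hhc, hexp⟩ := exists_differentiableOn_exp_eq (F := fun u ↦ F u / F c)
    (hF.div_const _) (fun u hu ↦ div_ne_zero (hne u hu) hFc) (w := 0) (by simp [hFc])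
  have hre : ∀ u ∈ ball c R, (h u).re ≤ M := fun u hu ↦ by
    rw [← Real.exp_le_exp, ← norm_exp, hexp u hu]
    exact hbound u hu
  have hmaps : Set.MapsTo (fun u ↦ c + u) (ball 0 R) (ball c R) := fun u hu ↦ by
    simpa using hu
  have hnorm : ‖h z‖ ≤ 2 * M * dist z c / (R - dist z c) := by
    simpa [dist_eq_norm] using borelCaratheodory_zero (f := fun u ↦ h (c + u)) hM
      (hh.comp (by fun_prop) hmaps) (fun u hu ↦ hre _ (hmaps hu)) hR
      (z := z - c) (by simpa [dist_eq_norm] using hz) (by simpa using hhc)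
  calc ‖F c / F z‖ = Real.exp (-h z).re := by
        rw [← norm_exp, exp_neg, hexp z hz, inv_div]
    _ ≤ Real.exp ‖h z‖ := Real.exp_le_exp.2 ((re_le_norm _).trans_eq (norm_neg _))
    _ ≤ _ := Real.exp_le_exp.2 hnorm

end NonvanishingOnBall

lemma norm_div_le_of_eq_mul_of_norm_le_on_sphere {f g P : ℂ → ℂ} {c : ℂ} {r B : ℝ} (hr : 0 < r)
    (hg : DiffContOnCl ℂ g (ball c r)) (hfg : ∀ z, f z = P z * g z) (hfc : f c ≠ 0)
    (hP : ∀ z ∈ sphere c r, ‖P c‖ ≤ ‖P z‖) (hf : ∀ z ∈ sphere c r, ‖f z / f c‖ ≤ B) {z : ℂ}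
    (hz : z ∈ closedBall c r) : ‖g z / g c‖ ≤ B := by
  have hPc : P c ≠ 0 := left_ne_zero_of_mul (hfg c ▸ hfc)
  refine norm_le_of_forall_mem_frontier_norm_le (f := fun u ↦ g u / g c) isBounded_ball
    (by simpa only [div_eq_inv_mul] using! hg.const_smul (g c)⁻¹) (fun w hw ↦ ?_)
    (by rwa [closure_ball c hr.ne'])
  rw [frontier_ball c hr.ne'] at hw
  calc ‖g w / g c‖ ≤ ‖P w / P c‖ * ‖g w / g c‖ := by
        refine le_mul_of_one_le_left (norm_nonneg _) ?_
        rw [norm_div]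
        exact (one_le_div (norm_pos_iff.2 hPc)).2 (hP w hw)
    _ = ‖f w / f c‖ := by rw [← norm_mul, div_mul_div_comm, ← hfg, ← hfg]
    _ ≤ B := hf w hw

lemma dist_le_dist_of_mem_closedBall_of_mem_sphere {X : Type*} [PseudoMetricSpace X] {c ρ w : X}
    {R r : ℝ} (hR : 2 * R ≤ r) (hρ : ρ ∈ closedBall c R) (hw : w ∈ sphere c r) :
    dist c ρ ≤ dist w ρ := by
  have htriangle := dist_triangle_right w c ρ
  linarith [mem_sphere.1 hw, mem_closedBall'.1 hρ]

section Disc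

variable {s₀ s : ℂ} {r R M θ : ℝ} {f : ℂ → ℂ}

lemma exists_eq_zeroProduct_mul_and_norm_div_le (hr : 0 < r) (hR : 2 * R ≤ r)
    (hf : AnalyticOnNhd ℂ f (closedBall s₀ r)) (hf₀ : f s₀ ≠ 0)
    (hfin : {ρ | f ρ = 0 ∧ ρ ∈ closedBall s₀ R}.Finite) {B : ℝ}
    (hbound : ∀ z ∈ sphere s₀ r, ‖f z / f s₀‖ ≤ B) :
    ∃ g : ℂ → ℂ, AnalyticOnNhd ℂ g (closedBall s₀ r) ∧ (∀ z ∈ closedBall s₀ R, g z ≠ 0) ∧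
      (∀ z, f z = zeroProduct f (closedBall s₀ R) z * g z) ∧
      ∀ z ∈ closedBall s₀ r, ‖g z / g s₀‖ ≤ B := by
  obtain ⟨g, hg, hgR, hfg⟩ := exists_analyticOnNhd_eq_zeroProduct_mul hf
    (convex_closedBall s₀ r).isPreconnected (closedBall_subset_closedBall (by linarith)) hfin
    (mem_closedBall_self hr.le) hf₀
  have hzeros : ∀ w ∈ sphere s₀ r, ‖zeroProduct f (closedBall s₀ R) s₀‖ ≤
      ‖zeroProduct f (closedBall s₀ R) w‖ := fun w hw ↦
    norm_zeroProduct_le_norm_zeroProduct hfin fun ρ hρ ↦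
      dist_le_dist_of_mem_closedBall_of_mem_sphere hR hρ hw
  exact ⟨g, hg, hgR, hfg, fun _ ↦ norm_div_le_of_eq_mul_of_norm_le_on_sphere hr
    (hg.differentiableOn.diffContOnCl_ball subset_rfl) hfg hf₀ hzeros hbound⟩

lemma norm_div_mul_finprod_zeros_le_exp (hR : 2 * R ≤ r)
    (hf : AnalyticOnNhd ℂ f (closedBall s₀ r)) (hf₀ : f s₀ ≠ 0)
    (hbound : ∀ z ∈ closedBall s₀ r, ‖f z / f s₀‖ < Real.exp M) (hs : s ∈ ball s₀ R)
    (hfs : f s ≠ 0) :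
    ‖f s₀ / f s *
        ∏ᶠ ρ ∈ {ρ | f ρ = 0 ∧ ρ ∈ closedBall s₀ R}, ((s - ρ) / (s₀ - ρ)) ^ zeroOrder f ρ‖
      ≤ Real.exp (2 * M * dist s s₀ / (R - dist s s₀)) := by
  have hr : 0 < r := by linarith [pos_of_mem_ball hs]
  have hs₀ : s₀ ∈ closedBall s₀ r := mem_closedBall_self hr.le
  have hM : 0 < M := by simpa [hf₀] using hbound s₀ hs₀
  have hRr : closedBall s₀ R ⊆ closedBall s₀ r := closedBall_subset_closedBall (by linarith)
  have hfin := finite_setOf_eq_zero_and_mem_of_isCompact hf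
    (convex_closedBall s₀ r).isPreconnected (isCompact_closedBall s₀ R) hRr hs₀ hf₀
  obtain ⟨g, hg, hg_ne, hfg, hg_bound⟩ := exists_eq_zeroProduct_mul_and_norm_div_le hr hR hf hf₀
    hfin fun z hz ↦ (hbound z (sphere_subset_closedBall hz)).le
  have hcancel : f s₀ / f s *
      (zeroProduct f (closedBall s₀ R) s / zeroProduct f (closedBall s₀ R) s₀) = g s₀ / g s := by
    rw [hfg] at hf₀ hfs
    rw [hfg s₀, hfg s]
    field_simp [left_ne_zero_of_mul hf₀, left_ne_zero_of_mul hfs]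
  rw [finprod_mem_div_pow_zeroOrder hfin, hcancel]
  have hball : ball s₀ R ⊆ closedBall s₀ R := ball_subset_closedBall
  exact norm_div_le_exp_of_ne_zero hM (hg.differentiableOn.mono (hball.trans hRr))
    (fun z hz ↦ hg_ne z (hball hz)) (fun z hz ↦ hg_bound z (hRr (hball hz))) hs

theorem titchmarsh_lemma_alpha_general (hr : 0 < r) (hθ : θ < 1 / 2)
    (hf : AnalyticOnNhd ℂ f (closedBall s₀ r)) (hf₀ : f s₀ ≠ 0)
    (hbound : ∀ z ∈ closedBall s₀ r, ‖f z / f s₀‖ < Real.exp M)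
    (hs : dist s s₀ ≤ θ * r) (hfs : f s ≠ 0) :
    ‖f s₀ / f s *
        ∏ᶠ ρ ∈ {ρ : ℂ | f ρ = 0 ∧ dist ρ s₀ ≤ r / 2}, ((s - ρ) / (s₀ - ρ)) ^ zeroOrder f ρ‖
      ≤ Real.exp (4 * θ / (1 - 2 * θ) * M) := by
  have hθ₀ : 0 ≤ θ := nonneg_of_mul_nonneg_left (dist_nonneg.trans hs) hr
  have hM : 0 < M := by simpa [hf₀] using hbound s₀ (mem_closedBall_self hr.le)
  have hθr : θ * r < r / 2 := by nlinarith
  refine (norm_div_mul_finprod_zeros_le_exp (R := r / 2) (by linarith) hf hf₀ hbound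
    (hs.trans_lt hθr) hfs).trans (Real.exp_le_exp.2 ?_)
  calc 2 * M * dist s s₀ / (r / 2 - dist s s₀) ≤ 2 * M * (θ * r) / (r / 2 - θ * r) := by
        have := sub_pos.2 hθr
        gcongr
    _ = 4 * θ / (1 - 2 * θ) * M := by
        have : 1 - 2 * θ ≠ 0 := by linarith
        have : r / 2 - θ * r ≠ 0 := by linarith
        field_simp
        ring

end Disc

/-- Titchmarsh's Lemma α, bounding `f s₀ / f s` times the Blaschke-type
product over the zeros of `f` near `s₀`. -/
theorem titchmarsh_lemma_alpha :
    ∃ C : ℝ, 0 < C ∧ ∀ (s₀ : ℂ) (r M : ℝ) (f : ℂ → ℂ), 0 < r → 1 < M →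
      AnalyticOnNhd ℂ f (Metric.closedBall s₀ r) → f s₀ ≠ 0 →
      (∀ s ∈ Metric.closedBall s₀ r, norm (f s / f s₀) < Real.exp M) →
      ∀ s : ℂ, dist s s₀ ≤ 3 / 8 * r → f s ≠ 0 →
        norm (f s₀ / f s *
            ∏ᶠ ρ ∈ {ρ : ℂ | f ρ = 0 ∧ dist ρ s₀ ≤ r / 2}, ((s - ρ) / (s₀ - ρ)) ^ zeroOrder f ρ)
          < Real.exp (C * M) :=
  ⟨7, by norm_num, fun _ _ _ _ hr hM hf hf₀ hbound _ hs hfs ↦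
    (titchmarsh_lemma_alpha_general hr (by norm_num) hf hf₀ hbound hs hfs).trans_lt
      (Real.exp_lt_exp.2 (by linarith))⟩
end

section
/- Let 0 < λ ≤ 1 and 0 < α ≤ 1. Then L(λ,α,s) ≠ 0 for every s ∈ ℂ with Re s ≥ 1 + α. -/
open scoped Classical

/-!
For `σ = re s > 1`, comparing a sum with an integral gives
`∑_{m ≥ 1} (m + α) ^ (-σ) < ∫_α^∞ x ^ (-σ) dx = α ^ (1 - σ) / (σ - 1)`, and for `σ ≥ 1 + α` the
right-hand side is at most `α ^ (-σ)`. Hence the term `m = 0` of the Lerch series strictly dominates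
the sum of the absolute values of all the other terms. Strictness of the comparison is what covers
the boundary `σ = 1 + α`; it is obtained term by term from Bernoulli's inequality.
-/

open Filter Topology

theorem hasSum_sub_succ_of_antitone {f : ℕ → ℝ} {l : ℝ} (hf : Antitone f)
    (hl : Tendsto f atTop (𝓝 l)) : HasSum (fun n ↦ f n - f (n + 1)) (f 0 - l) := by
  rw [hasSum_iff_tendsto_nat_of_nonneg fun n ↦ sub_nonneg.2 (hf n.le_succ)]
  simpa only [Finset.sum_range_sub'] using hl.const_sub (f 0)

theorem tsum_ne_zero_of_tsum_norm_succ_lt {E : Type*} [NormedAddCommGroup E] [CompleteSpace E]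
    {f : ℕ → E} (hf : Summable fun n ↦ ‖f n‖) (hlt : ∑' n, ‖f (n + 1)‖ < ‖f 0‖) :
    ∑' n, f n ≠ 0 := by
  intro h
  rw [hf.of_norm.tsum_eq_zero_add] at h
  refine hlt.not_ge ?_
  calc ‖f 0‖ = ‖∑' n, f (n + 1)‖ := by rw [eq_neg_of_add_eq_zero_left h, norm_neg]
    _ ≤ ∑' n, ‖f (n + 1)‖ := norm_tsum_le_tsum_norm ((summable_nat_add_iff 1).2 hf)

section PowerSums

variable {x y α σ : ℝ}

theorem sub_one_mul_sub_mul_rpow_neg_lt (hx : 0 < x) (hy : 0 < y) (hxy : x ≠ y) (hσ : 1 < σ) :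
    (σ - 1) * (y - x) * y ^ (-σ) < x ^ (1 - σ) - y ^ (1 - σ) := by
  have bernoulli : 1 + σ * (y / x - 1) < (y / x) ^ σ := by
    have hs : y / x - 1 ≠ 0 := by rwa [sub_ne_zero, ne_eq, div_eq_one_iff_eq hx.ne', eq_comm]
    simpa using one_add_mul_self_lt_rpow_one_add (by linarith [div_pos hy hx]) hs hσ
  have ratio : (y / x) ^ σ * y ^ (-σ) = x ^ (-σ) := by
    rw [Real.div_rpow hy.le hx.le, Real.rpow_neg hx.le, Real.rpow_neg hy.le]
    field_simp
  have scaled : (x + σ * (y - x)) * y ^ (-σ) < x * x ^ (-σ) := by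
    calc (x + σ * (y - x)) * y ^ (-σ) = x * ((1 + σ * (y / x - 1)) * y ^ (-σ)) := by field_simp
      _ < x * ((y / x) ^ σ * y ^ (-σ)) := by gcongr
      _ = x * x ^ (-σ) := by rw [ratio]
  have one_sub {z : ℝ} (hz : 0 < z) : z ^ (1 - σ) = z * z ^ (-σ) := by
    rw [sub_eq_add_neg, Real.rpow_add hz, Real.rpow_one]
  rw [one_sub hx, one_sub hy]
  linarith

theorem hasSum_add_rpow_sub_succ_add_rpow (hα : 0 < α) (hσ : 1 < σ) :
    HasSum (fun m : ℕ ↦ ((m : ℝ) + α) ^ (1 - σ) - (((m + 1 : ℕ) : ℝ) + α) ^ (1 - σ))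
      (α ^ (1 - σ)) := by
  have anti : Antitone fun m : ℕ ↦ ((m : ℝ) + α) ^ (1 - σ) := fun m n hmn ↦
    Real.rpow_le_rpow_of_nonpos (by positivity) (by gcongr) (by linarith)
  have lim : Tendsto (fun m : ℕ ↦ ((m : ℝ) + α) ^ (1 - σ)) atTop (𝓝 0) := by
    rw [← neg_sub σ 1]
    exact (tendsto_rpow_neg_atTop (sub_pos.2 hσ)).comp
      (tendsto_atTop_add_const_right _ α tendsto_natCast_atTop_atTop)
  simpa using hasSum_sub_succ_of_antitone anti lim

theorem summable_add_rpow_neg (hα : 0 < α) (hσ : 1 < σ) :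
    Summable fun m : ℕ ↦ ((m : ℝ) + α) ^ (-σ) := by
  refine ((Real.summable_one_div_nat_add_rpow α σ).2 hσ).congr fun m ↦ ?_
  have hm : 0 < (m : ℝ) + α := by positivity
  rw [abs_of_pos hm, Real.rpow_neg hm.le, one_div]

theorem tsum_succ_add_rpow_neg_lt (hα : 0 < α) (hσ : 1 < σ) :
    ∑' m : ℕ, (((m + 1 : ℕ) : ℝ) + α) ^ (-σ) < α ^ (1 - σ) / (σ - 1) := by
  rw [lt_div_iff₀' (sub_pos.2 hσ), ← tsum_mul_left,
    ← (hasSum_add_rpow_sub_succ_add_rpow hα hσ).tsum_eq]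
  have term_lt (m : ℕ) : (σ - 1) * (((m + 1 : ℕ) : ℝ) + α) ^ (-σ) <
      ((m : ℝ) + α) ^ (1 - σ) - (((m + 1 : ℕ) : ℝ) + α) ^ (1 - σ) := by
    have gap : (((m + 1 : ℕ) : ℝ) + α) - (m + α) = 1 := by push_cast; ring
    simpa only [gap, mul_one] using sub_one_mul_sub_mul_rpow_neg_lt
      (x := m + α) (y := (m + 1 : ℕ) + α) (by positivity) (by positivity) (by linarith) hσ
  have summable_succ := (summable_nat_add_iff 1).2 (summable_add_rpow_neg hα hσ)
  exact (summable_succ.mul_left _).tsum_lt_tsum (fun m ↦ (term_lt m).le) (term_lt 0)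
    (hasSum_add_rpow_sub_succ_add_rpow hα hσ).summable

theorem tsum_succ_add_rpow_neg_lt_rpow_neg (hα : 0 < α) (hσ : 1 + α ≤ σ) :
    ∑' m : ℕ, (((m + 1 : ℕ) : ℝ) + α) ^ (-σ) < α ^ (-σ) := by
  calc ∑' m : ℕ, (((m + 1 : ℕ) : ℝ) + α) ^ (-σ)
      < α ^ (1 - σ) / (σ - 1) := tsum_succ_add_rpow_neg_lt hα (by linarith)
    _ = α / (σ - 1) * α ^ (-σ) := by
      rw [sub_eq_add_neg 1 σ, Real.rpow_add hα, Real.rpow_one, mul_div_right_comm]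
    _ ≤ α ^ (-σ) := mul_le_of_le_one_left (by positivity)
      (div_le_one_of_le₀ (by linarith) (by linarith))

end PowerSums

theorem norm_div_natCast_add_cpow {α : ℝ} (hα : 0 < α) (m : ℕ) (c s : ℂ) :
    ‖c / ((m : ℂ) + α) ^ s‖ = ‖c‖ * ((m : ℝ) + α) ^ (-s.re) := by
  have hm : 0 < (m : ℝ) + α := by positivity
  have hcast : (m : ℂ) + α = ((m + α : ℝ) : ℂ) := by push_cast; rfl
  rw [norm_div, hcast, Complex.norm_cpow_eq_rpow_re_of_pos hm, Real.rpow_neg hm.le, div_eq_mul_inv]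

theorem tsum_div_natCast_add_cpow_ne_zero {c : ℕ → ℂ} (hc0 : c 0 ≠ 0) (hc : ∀ m, ‖c m‖ ≤ ‖c 0‖)
    {α : ℝ} (hα : 0 < α) {s : ℂ} (hs : 1 + α ≤ s.re) :
    ∑' m : ℕ, c m / ((m : ℂ) + α) ^ s ≠ 0 := by
  have norm_le (m : ℕ) : ‖c m / ((m : ℂ) + α) ^ s‖ ≤ ‖c 0‖ * ((m : ℝ) + α) ^ (-s.re) := by
    rw [norm_div_natCast_add_cpow hα]
    gcongr
    exact hc m
  have majorant : Summable fun m : ℕ ↦ ‖c 0‖ * ((m : ℝ) + α) ^ (-s.re) :=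
    (summable_add_rpow_neg hα (by linarith)).mul_left _
  have summable_norm := majorant.of_nonneg_of_le (fun _ ↦ norm_nonneg _) norm_le
  refine tsum_ne_zero_of_tsum_norm_succ_lt summable_norm ?_
  calc ∑' m : ℕ, ‖c (m + 1) / (((m + 1 : ℕ) : ℂ) + α) ^ s‖
      ≤ ∑' m : ℕ, ‖c 0‖ * (((m + 1 : ℕ) : ℝ) + α) ^ (-s.re) :=
        ((summable_nat_add_iff 1).2 summable_norm).tsum_le_tsum (fun m ↦ norm_le (m + 1))
          ((summable_nat_add_iff 1).2 majorant)
    _ = ‖c 0‖ * ∑' m : ℕ, (((m + 1 : ℕ) : ℝ) + α) ^ (-s.re) := tsum_mul_left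
    _ < ‖c 0‖ * α ^ (-s.re) :=
        mul_lt_mul_of_pos_left (tsum_succ_add_rpow_neg_lt_rpow_neg hα hs) (norm_pos_iff.2 hc0)
    _ = ‖c 0 / (((0 : ℕ) : ℂ) + α) ^ s‖ := by
        rw [norm_div_natCast_add_cpow hα, Nat.cast_zero, zero_add]

theorem norm_exp_two_pi_I_mul_mul_natCast (lam : ℝ) (m : ℕ) :
    ‖Complex.exp (2 * Real.pi * Complex.I * lam * m)‖ = 1 := by
  have harg : (2 * Real.pi * Complex.I * lam * m : ℂ) =
      ((2 * Real.pi * lam * m : ℝ) : ℂ) * Complex.I := by push_cast; ring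
  rw [harg, Complex.norm_exp_ofReal_mul_I]

theorem lerch_nonzero_right_halfplane_general (lam alp : ℝ) (halp0 : 0 < alp) (F : ℂ → ℂ)
    (hF : IsLerch lam alp F) : ∀ s : ℂ, 1 + alp ≤ s.re → F s ≠ 0 := by
  intro s hs
  rw [hF.2 s (by linarith), lerchSeries]
  refine tsum_div_natCast_add_cpow_ne_zero (Complex.exp_ne_zero _) (fun m ↦ ?_) halp0 hs
  simp only [norm_exp_two_pi_I_mul_mul_natCast, le_refl]

/-- the Lerch zeta-function has no zeros in the half-plane `re s ≥ 1 + α`. -/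
theorem lerch_nonzero_right_halfplane (lam alp : ℝ) (hlam0 : 0 < lam) (hlam1 : lam ≤ 1)
    (halp0 : 0 < alp) (halp1 : alp ≤ 1) (F : ℂ → ℂ) (hF : IsLerch lam alp F) :
    ∀ s : ℂ, 1 + alp ≤ s.re → F s ≠ 0 :=
  lerch_nonzero_right_halfplane_general lam alp halp0 F hF
end

section
/- Let λ ∈ {1/2, 1} and 0 < α ≤ 1. Then L(λ,α,s) ≠ 0 for every s = σ + it with σ < −1 and |t| ≥ 1. -/
open scoped Classical

/-!
Up to an elementary factor, `L(1, α, s)` is the Hurwitz zeta-function `ζ(s, α)` and `L(1/2, α, s)`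
is `ζ(s, α/2) - ζ(s, α/2 + 1/2)`. With `w = 1 - s`, the functional equation turns both into
`(2π)^(-w) Γ(w) (e^(-πiw/2) A(w) + e^(πiw/2) B(w))`, where `A` and `B` are Dirichlet series whose
coefficients have equal absolute values, with maximum at the first coefficient. For `1 < re w` the
first terms dominate, so `|A|` and `|B|` agree up to the factor `ζ(re w) / (2 - ζ(re w))`, while the
two exponentials differ in absolute value by the factor `e^(π |im w|)`, which prevents cancellation.
-/

section DirichletSeries

open Complex

variable {f g : ℕ → ℂ} {C : ℝ} {w : ℂ}

lemma norm_LSeries_sub_apply_one_le (hw : 1 < w.re) (hf : ∀ n ≠ 0, ‖f n‖ ≤ C) :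
    ‖LSeries f w - f 1‖ ≤ C * (∑' n : ℕ, 1 / (n : ℝ) ^ w.re - 1) := by
  have hterm (n : ℕ) : ‖LSeries.term f w n‖ ≤ C * (1 / (n : ℝ) ^ w.re) := by
    rcases eq_or_ne n 0 with rfl | hn
    · simp [Real.zero_rpow (zero_lt_one.trans hw).ne']
    · rw [LSeries.norm_term_eq, if_neg hn, mul_one_div]
      gcongr
      exact hf n hn
  have hzeta := (Real.summable_one_div_nat_rpow.mpr hw).hasSum.mul_left C
  have hL := (LSeriesSummable_of_bounded_of_one_lt_re hf hw).LSeriesHasSum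
  have htail := (hL.update 1 0).norm_le_of_bounded (hzeta.update 1 0) fun n => by
    rcases eq_or_ne n 1 with rfl | hn
    · simp
    · simpa [Function.update_of_ne hn] using hterm n
  calc ‖LSeries f w - f 1‖ = ‖0 - LSeries.term f w 1 + LSeries f w‖ := by simp [sub_eq_neg_add]
    _ ≤ 0 - C * (1 / ((1 : ℕ) : ℝ) ^ w.re) + C * ∑' n : ℕ, 1 / (n : ℝ) ^ w.re := htail
    _ = C * (∑' n : ℕ, 1 / (n : ℝ) ^ w.re - 1) := by
        rw [Nat.cast_one, Real.one_rpow]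
        ring

lemma mul_norm_LSeries_lt_norm_LSeries {r : ℝ} (hr : 0 ≤ r) (hw : 1 < w.re)
    (hζ : (∑' n : ℕ, 1 / (n : ℝ) ^ w.re) * (1 + r) < 2) (hf1 : f 1 ≠ 0)
    (hf : ∀ n ≠ 0, ‖f n‖ ≤ ‖f 1‖) (hg : ∀ n ≠ 0, ‖g n‖ ≤ ‖f 1‖) :
    r * ‖LSeries g w‖ < ‖LSeries f w‖ := by
  set ζ := ∑' n : ℕ, 1 / (n : ℝ) ^ w.re
  have hf_lower : ‖f 1‖ * (2 - ζ) ≤ ‖LSeries f w‖ := by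
    linarith [norm_LSeries_sub_apply_one_le hw hf, norm_sub_norm_le (f 1) (LSeries f w),
      norm_sub_rev (f 1) (LSeries f w)]
  have hg_upper : ‖LSeries g w‖ ≤ ‖f 1‖ * ζ := by
    linarith [norm_LSeries_sub_apply_one_le hw hg, norm_le_norm_add_norm_sub' (LSeries g w) (g 1),
      hg 1 one_ne_zero]
  calc r * ‖LSeries g w‖ ≤ r * (‖f 1‖ * ζ) := by gcongr
    _ = ‖f 1‖ * (ζ * (1 + r) - ζ) := by ring
    _ < ‖f 1‖ * (2 - ζ) := by gcongr
    _ ≤ ‖LSeries f w‖ := hf_lower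

lemma mul_add_mul_ne_zero_of_norm_le {𝕜 : Type*} [NormedField 𝕜] {x y a b : 𝕜} {r : ℝ}
    (hx : x ≠ 0) (hy : ‖y‖ ≤ r * ‖x‖) (hab : r * ‖b‖ < ‖a‖) : x * a + y * b ≠ 0 := by
  intro h
  have hnorm : ‖x‖ * ‖a‖ = ‖y‖ * ‖b‖ := by
    rw [← norm_mul, ← norm_mul, eq_neg_of_add_eq_zero_left h, norm_neg]
  have hlt : ‖y‖ * ‖b‖ < ‖x‖ * ‖a‖ :=
    calc ‖y‖ * ‖b‖ ≤ r * ‖x‖ * ‖b‖ := by gcongr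
      _ = ‖x‖ * (r * ‖b‖) := by ring
      _ < ‖x‖ * ‖a‖ := by gcongr
  exact hlt.ne' hnorm

lemma exp_mul_LSeries_add_exp_mul_LSeries_ne_zero (hw : 1 < w.re)
    (hζ : (∑' n : ℕ, 1 / (n : ℝ) ^ w.re) * (1 + Real.exp (-(Real.pi * |w.im|))) < 2)
    (hf1 : f 1 ≠ 0) (hf : ∀ n ≠ 0, ‖f n‖ ≤ ‖f 1‖) (hfg : ∀ n ≠ 0, ‖g n‖ = ‖f n‖) :
    exp (-Real.pi * I * w / 2) * LSeries f w + exp (Real.pi * I * w / 2) * LSeries g w ≠ 0 := by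
  have hg1 : ‖g 1‖ = ‖f 1‖ := hfg 1 one_ne_zero
  have hg (n : ℕ) (hn : n ≠ 0) : ‖g n‖ ≤ ‖f 1‖ := (hfg n hn).trans_le (hf n hn)
  have hg1_ne : g 1 ≠ 0 := by rwa [← norm_ne_zero_iff, hg1, norm_ne_zero_iff]
  have hneg : ‖exp (-Real.pi * I * w / 2)‖ = Real.exp (Real.pi * w.im / 2) := by simp [norm_exp]
  have hpos : ‖exp (Real.pi * I * w / 2)‖ = Real.exp (-(Real.pi * w.im / 2)) := by
    simp [norm_exp, neg_div]
  rcases le_total 0 w.im with him | him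
  · refine mul_add_mul_ne_zero_of_norm_le (exp_ne_zero _) ?_
      (mul_norm_LSeries_lt_norm_LSeries (Real.exp_nonneg _) hw hζ hf1 hf hg)
    rw [hneg, hpos, ← Real.exp_add, abs_of_nonneg him]
    apply le_of_eq
    ring_nf
  · rw [add_comm]
    refine mul_add_mul_ne_zero_of_norm_le (exp_ne_zero _) ?_
      (mul_norm_LSeries_lt_norm_LSeries (Real.exp_nonneg _) hw hζ hg1_ne
        (by simpa only [hg1] using hg) (by simpa only [hg1] using hf))
    rw [hneg, hpos, ← Real.exp_add, abs_of_nonpos him]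
    apply le_of_eq
    ring_nf

end DirichletSeries

section HurwitzZeta

open Complex ComplexConjugate HurwitzZeta

lemma norm_fourier_apply {T : ℝ} (n : ℤ) (x : AddCircle T) : ‖fourier n x‖ = 1 :=
  Circle.norm_coe _

lemma fourier_apply_neg {T : ℝ} (n : ℤ) (x : AddCircle T) :
    fourier n (-x) = conj (fourier n x) := by
  rw [fourier_apply, zsmul_neg, fourier_neg']

lemma LSeriesHasSum_fourier (a : UnitAddCircle) {w : ℂ} (hw : 1 < w.re) :
    LSeriesHasSum (fun n : ℕ => fourier (n : ℤ) a) w (expZeta a w) := by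
  induction a using QuotientAddGroup.induction_on with
  | H x =>
    convert LSeriesHasSum_exp x hw using 3 with n
    rw [fourier_coe_apply]
    push_cast
    ring_nf

lemma two_pi_cpow_mul_Gamma_ne_zero {w : ℂ} (hw : 0 < w.re) :
    (2 * Real.pi : ℂ) ^ (-w) * Gamma w ≠ 0 :=
  mul_ne_zero (by simp [cpow_eq_zero_iff, Real.pi_ne_zero]) (Gamma_ne_zero_of_re_pos hw)

variable (a : UnitAddCircle) {w : ℂ}

lemma hurwitzZeta_one_sub_eq_LSeries (hw : 1 < w.re) :
    hurwitzZeta a (1 - w) = (2 * Real.pi) ^ (-w) * Gamma w *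
      (exp (-Real.pi * I * w / 2) * LSeries (fun n : ℕ => fourier (n : ℤ) a) w +
        exp (Real.pi * I * w / 2) * LSeries (fun n : ℕ => fourier (n : ℤ) (-a)) w) := by
  have hw_neg (n : ℕ) : w ≠ -n := by
    rintro rfl
    simp only [neg_re, natCast_re] at hw
    linarith [n.cast_nonneg (α := ℝ)]
  have hw_one : w ≠ 1 := by
    rintro rfl
    simp at hw
  rw [hurwitzZeta_one_sub a hw_neg (.inr hw_one), (LSeriesHasSum_fourier a hw).LSeries_eq,
    (LSeriesHasSum_fourier (-a) hw).LSeries_eq]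

lemma hurwitzZeta_one_sub_ne_zero (hw : 1 < w.re)
    (hζ : (∑' n : ℕ, 1 / (n : ℝ) ^ w.re) * (1 + Real.exp (-(Real.pi * |w.im|))) < 2) :
    hurwitzZeta a (1 - w) ≠ 0 := by
  rw [hurwitzZeta_one_sub_eq_LSeries a hw]
  refine mul_ne_zero (two_pi_cpow_mul_Gamma_ne_zero (zero_lt_one.trans hw))
    (exp_mul_LSeries_add_exp_mul_LSeries_ne_zero hw hζ ?_ (fun n _ => ?_) fun n _ => ?_)
  · rw [← norm_ne_zero_iff, norm_fourier_apply]
    exact one_ne_zero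
  · rw [norm_fourier_apply, norm_fourier_apply]
  · rw [norm_fourier_apply, norm_fourier_apply]

lemma hurwitzZeta_one_sub_sub_hurwitzZeta_add_half_ne_zero (hw : 1 < w.re)
    (hζ : (∑' n : ℕ, 1 / (n : ℝ) ^ w.re) * (1 + Real.exp (-(Real.pi * |w.im|))) < 2) :
    hurwitzZeta a (1 - w) - hurwitzZeta (a + (1 / 2 : ℝ)) (1 - w) ≠ 0 := by
  set b : UnitAddCircle := a + (1 / 2 : ℝ)
  set e : UnitAddCircle → ℕ → ℂ := fun x n => fourier (n : ℤ) x
  have he (x : UnitAddCircle) (n : ℕ) : ‖e x n‖ = 1 := norm_fourier_apply _ _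
  have hb : e b 1 = -e a 1 := by
    simpa [e, b] using fourier_add_half_inv_index one_ne_zero one_pos a
  have hfirst : ‖(e a - e b) 1‖ = 2 := by
    rw [Pi.sub_apply, hb, sub_neg_eq_add, ← two_mul, norm_mul, he, mul_one, norm_ofNat]
  have hsummable (x : UnitAddCircle) : LSeriesSummable (e x) w :=
    (LSeriesHasSum_fourier x hw).LSeriesSummable
  have hne : exp (-Real.pi * I * w / 2) * LSeries (e a - e b) w +
      exp (Real.pi * I * w / 2) * LSeries (e (-a) - e (-b)) w ≠ 0 := by
    refine exp_mul_LSeries_add_exp_mul_LSeries_ne_zero hw hζ ?_ (fun n _ => ?_) fun n _ => ?_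
    · rw [← norm_ne_zero_iff, hfirst]
      exact two_ne_zero
    · rw [hfirst]
      calc ‖e a n - e b n‖ ≤ ‖e a n‖ + ‖e b n‖ := norm_sub_le _ _
        _ = 2 := by rw [he, he, one_add_one_eq_two]
    · simp only [e, Pi.sub_apply, fourier_apply_neg, ← map_sub, norm_conj]
  rw [LSeries_sub (hsummable a) (hsummable b), LSeries_sub (hsummable _) (hsummable _)] at hne
  rw [hurwitzZeta_one_sub_eq_LSeries a hw, hurwitzZeta_one_sub_eq_LSeries b hw]
  convert mul_ne_zero (two_pi_cpow_mul_Gamma_ne_zero (zero_lt_one.trans hw)) hne using 1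
  ring

end HurwitzZeta

section Lerch

open Complex HurwitzZeta

variable {lam alp : ℝ}

lemma IsLerch.eq_of_ne_one {F G : ℂ → ℂ} (hF : IsLerch lam alp F) (hG : IsLerch lam alp G) {s : ℂ}
    (hs : s ≠ 1) : F s = G s := by
  have hanalytic {H : ℂ → ℂ} (hH : IsLerch lam alp H) : AnalyticOnNhd ℂ H {1}ᶜ :=
    DifferentiableOn.analyticOnNhd (fun z hz => (hH.1 z hz).differentiableWithinAt)
      isOpen_compl_singleton
  have hconn : IsPreconnected ({1}ᶜ : Set ℂ) :=
    (isConnected_compl_singleton_of_one_lt_rank (by simp) 1).isPreconnected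
  have hnhds : {z : ℂ | 1 < z.re} ∈ nhds 2 :=
    (isOpen_lt continuous_const continuous_re).mem_nhds (by norm_num)
  exact (hanalytic hF).eqOn_of_preconnected_of_eventuallyEq (hanalytic hG) hconn
    (show (2 : ℂ) ∈ {1}ᶜ by norm_num)
    (Filter.eventuallyEq_of_mem hnhds fun z hz => (hF.2 z hz).trans (hG.2 z hz).symm) hs

lemma isLerch_one_hurwitzZeta (halp : alp ∈ Set.Icc 0 1) :
    IsLerch 1 alp (hurwitzZeta (alp : UnitAddCircle)) := by
  refine ⟨fun s hs => differentiableAt_hurwitzZeta _ hs, fun s hs => ?_⟩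
  rw [lerchSeries, ← (hasSum_hurwitzZeta_of_one_lt_re halp hs).tsum_eq]
  refine tsum_congr fun m => ?_
  have hexp : exp (2 * Real.pi * I * (1 : ℝ) * m) = 1 :=
    exp_eq_one_iff.mpr ⟨m, by push_cast; ring⟩
  rw [hexp]

lemma ofReal_cpow_neg_mul_one_div_cpow {r x : ℝ} (hr : 0 ≤ r) (hx : 0 ≤ x) (s : ℂ) :
    (r : ℂ) ^ (-s) * (1 / (x : ℂ) ^ s) = 1 / ((r * x : ℝ) : ℂ) ^ s := by
  rw [ofReal_mul, mul_cpow_ofReal_nonneg hr hx, cpow_neg, one_div, one_div, mul_inv]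

lemma exp_two_pi_mul_I_mul_half_mul_natCast (m : ℕ) :
    exp (2 * Real.pi * I * (1 / 2 : ℝ) * m) = (-1) ^ m := by
  rw [← exp_pi_mul_I, ← exp_nat_mul]
  congr 1
  push_cast
  ring

lemma lerchSeries_half (halp : alp ∈ Set.Icc 0 1) {s : ℂ} (hs : 1 < s.re) :
    lerchSeries (1 / 2) alp s = 2 ^ (-s) *
      (hurwitzZeta ((alp / 2 : ℝ) : UnitAddCircle) s -
        hurwitzZeta ((alp / 2 : ℝ) + (1 / 2 : ℝ) : UnitAddCircle) s) := by
  obtain ⟨halp0, halp1⟩ := halp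
  set u : ℕ → ℂ := fun m => exp (2 * Real.pi * I * (1 / 2 : ℝ) * m) / ((m : ℂ) + alp) ^ s
  have hu_even (k : ℕ) : u (2 * k) = 2 ^ (-s) * (1 / (k + (alp / 2 : ℝ) : ℂ) ^ s) := by
    have hscale := ofReal_cpow_neg_mul_one_div_cpow zero_le_two (x := k + alp / 2)
      (by positivity) s
    simp only [u, exp_two_pi_mul_I_mul_half_mul_natCast, (even_two_mul k).neg_one_pow]
    push_cast at hscale ⊢
    rw [hscale]
    ring_nf
  have hu_odd (k : ℕ) :
      u (2 * k + 1) = -2 ^ (-s) * (1 / (k + (alp / 2 + 1 / 2 : ℝ) : ℂ) ^ s) := by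
    have hscale := ofReal_cpow_neg_mul_one_div_cpow zero_le_two (x := k + (alp / 2 + 1 / 2))
      (by positivity) s
    simp only [u, exp_two_pi_mul_I_mul_half_mul_natCast, (odd_two_mul_add_one k).neg_one_pow]
    push_cast at hscale ⊢
    rw [neg_mul, hscale]
    ring_nf
  have heven := (hasSum_hurwitzZeta_of_one_lt_re (a := alp / 2)
    ⟨by linarith, by linarith⟩ hs).mul_left ((2 : ℂ) ^ (-s))
  have hodd := (hasSum_hurwitzZeta_of_one_lt_re (a := alp / 2 + 1 / 2)
    ⟨by linarith, by linarith⟩ hs).mul_left (-(2 : ℂ) ^ (-s))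
  have hsum := (heven.congr_fun hu_even).even_add_odd (hodd.congr_fun hu_odd)
  rw [lerchSeries, hsum.tsum_eq, ← AddCircle.coe_add]
  ring

lemma isLerch_half_hurwitzZeta_sub (halp : alp ∈ Set.Icc 0 1) :
    IsLerch (1 / 2) alp fun s => 2 ^ (-s) *
      (hurwitzZeta ((alp / 2 : ℝ) : UnitAddCircle) s -
        hurwitzZeta ((alp / 2 : ℝ) + (1 / 2 : ℝ) : UnitAddCircle) s) :=
  ⟨fun s _ => (differentiableAt_id.neg.const_cpow (.inl two_ne_zero)).mul
    (differentiable_hurwitzZeta_sub_hurwitzZeta _ _ s), fun _ hs => (lerchSeries_half halp hs).symm⟩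

theorem lerch_nonzero_left_halfplane_general (hlam : lam = 1 / 2 ∨ lam = 1)
    (halp0 : 0 < alp) (halp1 : alp ≤ 1) {F : ℂ → ℂ} (hF : IsLerch lam alp F) {s : ℂ}
    (hs : s.re < 0)
    (hζ : (∑' n : ℕ, 1 / (n : ℝ) ^ (1 - s.re)) * (1 + Real.exp (-(Real.pi * |s.im|))) < 2) :
    F s ≠ 0 := by
  have halp : alp ∈ Set.Icc 0 1 := ⟨halp0.le, halp1⟩
  have hs1 : s ≠ 1 := by
    rintro rfl
    exact absurd hs (by simp)
  have hw : 1 < (1 - s).re := by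
    rw [sub_re, one_re]
    linarith
  replace hζ : (∑' n : ℕ, 1 / (n : ℝ) ^ (1 - s).re) *
      (1 + Real.exp (-(Real.pi * |(1 - s).im|))) < 2 := by simpa using hζ
  rcases hlam with rfl | rfl
  · rw [hF.eq_of_ne_one (isLerch_half_hurwitzZeta_sub halp) hs1]
    refine mul_ne_zero (by simp [cpow_eq_zero_iff]) ?_
    simpa using hurwitzZeta_one_sub_sub_hurwitzZeta_add_half_ne_zero (alp / 2 : ℝ) hw hζ
  · rw [hF.eq_of_ne_one (isLerch_one_hurwitzZeta halp) hs1]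
    simpa using hurwitzZeta_one_sub_ne_zero alp hw hζ

end Lerch

lemma tsum_one_div_rpow_le_pi_sq_div_six {x : ℝ} (hx : 2 ≤ x) :
    ∑' n : ℕ, 1 / (n : ℝ) ^ x ≤ Real.pi ^ 2 / 6 := by
  rw [← hasSum_zeta_two.tsum_eq]
  refine Summable.tsum_le_tsum (fun n => ?_)
    (Real.summable_one_div_nat_rpow.mpr (one_lt_two.trans_le hx)) hasSum_zeta_two.summable
  rcases n.eq_zero_or_pos with rfl | hn
  · simp [Real.zero_rpow (two_pos.trans_le hx).ne']
  · rw [← Real.rpow_natCast]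
    gcongr
    · exact_mod_cast hn
    · exact_mod_cast hx

lemma tsum_one_div_rpow_mul_one_add_exp_lt_two {x t : ℝ} (hx : 2 ≤ x) (ht : 1 ≤ t) :
    (∑' n : ℕ, 1 / (n : ℝ) ^ x) * (1 + Real.exp (-(Real.pi * t))) < 2 := by
  have hexp_pi : 8 ≤ Real.exp Real.pi := by
    nlinarith [Real.quadratic_le_exp_of_nonneg Real.pi_nonneg, Real.pi_gt_three]
  have hexp : Real.exp (-(Real.pi * t)) ≤ 8⁻¹ :=
    calc Real.exp (-(Real.pi * t)) ≤ Real.exp (-Real.pi) := by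
          gcongr
          exact le_mul_of_one_le_right Real.pi_nonneg ht
      _ ≤ 8⁻¹ := by
          rw [Real.exp_neg]
          gcongr
  calc (∑' n : ℕ, 1 / (n : ℝ) ^ x) * (1 + Real.exp (-(Real.pi * t)))
      ≤ Real.pi ^ 2 / 6 * (1 + 8⁻¹) := by
        gcongr
        exact tsum_one_div_rpow_le_pi_sq_div_six hx
    _ < 2 := by nlinarith [Real.pi_lt_d2, Real.pi_pos]

/-- for `λ ∈ {1/2, 1}` the Lerch zeta-function has no zeros with
`σ < -1` and `|t| ≥ 1`. -/
theorem lerch_nonzero_left_halfplane (lam alp : ℝ) (hlam : lam = 1 / 2 ∨ lam = 1)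
    (halp0 : 0 < alp) (halp1 : alp ≤ 1) (F : ℂ → ℂ) (hF : IsLerch lam alp F) :
    ∀ s : ℂ, s.re < -1 → 1 ≤ |s.im| → F s ≠ 0 :=
  fun _ hs ht => lerch_nonzero_left_halfplane_general hlam halp0 halp1 hF (by linarith)
    (tsum_one_div_rpow_mul_one_add_exp_lt_two (by linarith) ht)
end

section
/- Let 0 < λ ≤ 1 and 0 < α ≤ 1. There exists a function F : ℂ → ℂ that is complex differentiable on ℂ \ {1} and satisfies F(s) = ∑_{m=0}^∞ e^{2πiλm}/(m+α)^s for all s with Re s > 1; moreover any two such functions agree on ℂ \ {1}, and if 0 < λ < 1 then F can be chosen complex differentiable on all of ℂ. -/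
open scoped Classical

/-!
Put `z = exp (2πiλ)`. If `z ≠ 1`, summation by parts gives
`(1 - z) ∑ zᵐ g (m + a) = g a + z ∑ zᵐ (Δ g) (m + a)`. For `g v = v ^ (-s)` the `k`-th forward
difference is `O (v ^ (-Re s - k))` by the mean value theorem, so `k` summations by parts continue
the series to `1 - k < Re s`, and these continuations fit together to an entire function. If `z = 1`
the series is a Hurwitz zeta series with finitely many terms removed. Uniqueness is the identity
theorem on the connected set `ℂ \ {1}`.
-/

open Set
open scoped fwdDiff

theorem norm_fwdDiff_iter_le {E : Type*} [NormedAddCommGroup E] [NormedSpace ℝ E]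
    {f : ℕ → ℝ → E} {k : ℕ} {h u C : ℝ} (hh : 0 ≤ h)
    (hf : ∀ j < k, ∀ v, u ≤ v → HasDerivAt (f j) (f (j + 1) v) v)
    (hC : ∀ v, u ≤ v → ‖f k v‖ ≤ C) :
    ‖Δ_[h] ^[k] (f 0) u‖ ≤ C * h ^ k := by
  induction k generalizing f C with
  | zero => simpa using hC u le_rfl
  | succ k ih =>
    have hderiv : ∀ j < k, ∀ v, u ≤ v →
        HasDerivAt (Δ_[h] (f j)) (Δ_[h] (f (j + 1)) v) v := fun j hj v hv ↦
      ((hf j (by lia) (v + h) (by linarith)).comp_add_const v h).sub (hf j (by lia) v hv)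
    have hbound : ∀ v, u ≤ v → ‖Δ_[h] (f k) v‖ ≤ C * h := fun v hv ↦ by
      simpa [fwdDiff] using norm_image_sub_le_of_norm_deriv_le_segment' (a := v) (b := v + h)
        (fun x hx ↦ (hf k k.lt_succ_self x (hv.trans hx.1)).hasDerivWithinAt)
        (fun x hx ↦ hC x (hv.trans hx.1)) (v + h) (by simpa using hh)
    rw [Function.iterate_succ_apply, pow_succ', ← mul_assoc]
    exact ih (f := fun j ↦ Δ_[h] (f j)) hderiv hbound

theorem hasDerivAt_descPochhammer_eval_mul_cpow (w : ℂ) (k : ℕ) {v : ℝ} (hv : v ≠ 0) :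
    HasDerivAt (fun x : ℝ ↦ (descPochhammer ℂ k).eval w * (x : ℂ) ^ (w - k))
      ((descPochhammer ℂ (k + 1)).eval w * (v : ℂ) ^ (w - (k + 1 : ℕ))) v := by
  rw [descPochhammer_succ_eval, mul_assoc]
  refine HasDerivAt.const_mul _ ?_
  obtain hw | hw := eq_or_ne (w - k) 0
  · simpa [hw] using hasDerivAt_const v (1 : ℂ)
  · simpa [sub_sub] using hasDerivAt_ofReal_cpow_const hv hw

theorem norm_fwdDiff_iter_cpow_le {w : ℂ} {k : ℕ} {h u : ℝ} (hh : 0 ≤ h) (hu : 0 < u)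
    (hw : w.re ≤ k) :
    ‖Δ_[h] ^[k] (fun v : ℝ ↦ (v : ℂ) ^ w) u‖ ≤
      ‖(descPochhammer ℂ k).eval w‖ * u ^ (w.re - k) * h ^ k := by
  have hbound : ∀ v : ℝ, u ≤ v → ‖(descPochhammer ℂ k).eval w * (v : ℂ) ^ (w - k)‖ ≤
      ‖(descPochhammer ℂ k).eval w‖ * u ^ (w.re - k) := fun v hv ↦ by
    rw [norm_mul, Complex.norm_cpow_eq_rpow_re_of_pos (hu.trans_le hv), Complex.sub_re,
      Complex.natCast_re]
    gcongr ?_ * ?_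
    exact Real.rpow_le_rpow_of_nonpos hu hv (by linarith)
  simpa using norm_fwdDiff_iter_le hh
    (fun j _ v hv ↦ hasDerivAt_descPochhammer_eval_mul_cpow w j (hu.trans_le hv).ne') hbound

theorem differentiable_fwdDiff_iter_cpow_neg (k : ℕ) {h u : ℝ} (hh : 0 ≤ h) (hu : 0 < u) :
    Differentiable ℂ fun s : ℂ ↦ Δ_[h] ^[k] (fun v : ℝ ↦ (v : ℂ) ^ (-s)) u := by
  simp only [fwdDiff_iter_eq_sum_shift]
  refine Differentiable.fun_sum fun j _ ↦ Differentiable.const_smul (fun s ↦ ?_) _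
  have hpos : 0 < u + j • h := by positivity
  exact differentiableAt_id.neg.const_cpow (.inl (Complex.ofReal_ne_zero.mpr hpos.ne'))

theorem one_sub_mul_tsum_pow_mul {R M : Type*} [DivisionRing R] [TopologicalSpace R]
    [IsTopologicalRing R] [T2Space R] [AddCommMonoidWithOne M] {z : R} {g : M → R} {a : M}
    (hg : Summable fun m : ℕ ↦ z ^ m * g (m + a)) :
    (1 - z) * ∑' m : ℕ, z ^ m * g (m + a) = g a + z * ∑' m : ℕ, z ^ m * Δ_[1] g (m + a) := by
  have hshift : Summable fun m : ℕ ↦ z ^ (m + 1) * g (m + 1 + a) := by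
    simpa using (summable_nat_add_iff 1).mpr hg
  have hdiff (m : ℕ) : z * (z ^ m * Δ_[1] g (m + a)) =
      z ^ (m + 1) * g (m + 1 + a) - z * (z ^ m * g (m + a)) := by
    rw [fwdDiff, add_right_comm, pow_succ', mul_assoc, mul_sub, mul_sub]
  calc (1 - z) * ∑' m : ℕ, z ^ m * g (m + a)
      = g a + ∑' m : ℕ, z ^ (m + 1) * g (m + 1 + a) - ∑' m : ℕ, z * (z ^ m * g (m + a)) := by
        rw [sub_mul, one_mul, tsum_mul_left]
        congr 1
        simpa using hg.tsum_eq_zero_add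
    _ = _ := by
        rw [add_sub_assoc, ← hshift.tsum_sub (hg.mul_left z), ← tsum_mul_left]
        simp only [hdiff]

theorem differentiableOn_tsum_of_norm_le_mul {ι E : Type*} [NormedAddCommGroup E]
    [NormedSpace ℂ E] [CompleteSpace E] {f : ι → ℂ → E} {C : ℂ → ℝ} {b : ι → ℝ} {U : Set ℂ}
    (hU : IsOpen U) (hf : ∀ i, DifferentiableOn ℂ (f i) U) (hC : ContinuousOn C U)
    (hb : Summable b) (hb0 : ∀ i, 0 ≤ b i) (hfC : ∀ i, ∀ w ∈ U, ‖f i w‖ ≤ C w * b i) :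
    DifferentiableOn ℂ (fun w ↦ ∑' i, f i w) U := by
  intro w₀ hw₀
  set V := U ∩ C ⁻¹' Iio (C w₀ + 1)
  have hV : IsOpen V := hC.isOpen_inter_preimage hU isOpen_Iio
  have hle : ∀ i, ∀ w ∈ V, ‖f i w‖ ≤ (C w₀ + 1) * b i := fun i w hw ↦
    (hfC i w hw.1).trans (mul_le_mul_of_nonneg_right (le_of_lt hw.2) (hb0 i))
  exact ((Complex.differentiableOn_tsum_of_summable_norm (hb.mul_left _)
    (fun i ↦ (hf i).mono inter_subset_left) hV hle).differentiableAt
      (hV.mem_nhds ⟨hw₀, lt_add_one (C w₀)⟩)).differentiableWithinAt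

theorem exists_differentiable_forall_eqOn {𝕜 E F : Type*} [NontriviallyNormedField 𝕜]
    [NormedAddCommGroup E] [NormedSpace 𝕜 E] [NormedAddCommGroup F] [NormedSpace 𝕜 F]
    {f : ℕ → E → F} {U : ℕ → Set E} (hUo : ∀ n, IsOpen (U n)) (hU : Monotone U)
    (hcover : ∀ x, ∃ n, x ∈ U n) (hf : ∀ n, DifferentiableOn 𝕜 (f n) (U n))
    (hsucc : ∀ n, EqOn (f (n + 1)) (f n) (U n)) :
    ∃ g : E → F, Differentiable 𝕜 g ∧ ∀ n, EqOn g (f n) (U n) := by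
  have hle : ∀ m n, m ≤ n → EqOn (f n) (f m) (U m) := fun m n hmn ↦ by
    induction n, hmn using Nat.le_induction with
    | base => exact eqOn_refl _ _
    | succ n hmn ih => exact ((hsucc n).mono (hU hmn)).trans ih
  choose N hN using hcover
  have hglue : ∀ n, EqOn (fun x ↦ f (N x) x) (f n) (U n) := fun n x hx ↦ by
    obtain h | h := le_total n (N x)
    · exact hle n (N x) h hx
    · exact (hle (N x) n h (hN x)).symm
  refine ⟨_, fun x ↦ ?_, hglue⟩
  have hx : U (N x) ∈ nhds x := (hUo (N x)).mem_nhds (hN x)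
  exact ((hf (N x)).differentiableAt hx).congr_of_eventuallyEq
    ((hglue (N x)).eventuallyEq_of_mem hx)

theorem rpow_neg_le_rpow_mul_rpow_neg {a u p q : ℝ} (ha : 0 < a) (hau : a ≤ u) (hpq : p ≤ q) :
    u ^ (-q) ≤ a ^ (p - q) * u ^ (-p) := by
  have hu : 0 < u := ha.trans_le hau
  calc u ^ (-q) = u ^ (p - q) * u ^ (-p) := by rw [← Real.rpow_add hu]; ring_nf
    _ ≤ a ^ (p - q) * u ^ (-p) := by
      gcongr ?_ * _
      exact Real.rpow_le_rpow_of_nonpos ha hau (by linarith)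

theorem summable_nat_add_rpow_neg {a p : ℝ} (ha : 0 ≤ a) (hp : 1 < p) :
    Summable fun m : ℕ ↦ ((m : ℝ) + a) ^ (-p) := by
  refine ((Real.summable_one_div_nat_add_rpow a p).mpr hp).congr fun m ↦ ?_
  have hm : 0 ≤ (m : ℝ) + a := by positivity
  rw [abs_of_nonneg hm, Real.rpow_neg hm, one_div]

/-- The series `∑ zᵐ Δᵏ(v ↦ v ^ (-s))(m + a)` left over after `k` summations by parts of
`∑ zᵐ (m + a) ^ (-s)`. For `‖z‖ ≤ 1` it converges when `1 - k < Re s`. -/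
noncomputable def fwdDiffSeries (z : ℂ) (a : ℝ) (k : ℕ) (s : ℂ) : ℂ :=
  ∑' m : ℕ, z ^ m * Δ_[1] ^[k] (fun v : ℝ ↦ (v : ℂ) ^ (-s)) (m + a)

/-- The continuation of `∑ zᵐ (m + a) ^ (-s)` to `1 - n < Re s` obtained by `n` summations by
parts: `n` boundary terms at `a` and a multiple of the remaining series. -/
noncomputable def abelContinuation (z : ℂ) (a : ℝ) (n : ℕ) (s : ℂ) : ℂ :=
  ∑ k ∈ Finset.range n, z ^ k / (1 - z) ^ (k + 1) * Δ_[1] ^[k] (fun v : ℝ ↦ (v : ℂ) ^ (-s)) a +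
    (z / (1 - z)) ^ n * fwdDiffSeries z a n s

section Continuation

variable {z : ℂ} {a : ℝ}

theorem norm_pow_mul_fwdDiff_iter_cpow_neg_le (hz : ‖z‖ ≤ 1) (ha : 0 < a) {k : ℕ} {s : ℂ}
    {p : ℝ} (hp : 0 ≤ p) (hps : p ≤ s.re + k) (m : ℕ) :
    ‖z ^ m * Δ_[1] ^[k] (fun v : ℝ ↦ (v : ℂ) ^ (-s)) (m + a)‖ ≤
      ‖(descPochhammer ℂ k).eval (-s)‖ * a ^ (p - (s.re + k)) * ((m : ℝ) + a) ^ (-p) := by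
  have hre : (-s).re ≤ k := by rw [Complex.neg_re]; linarith
  calc ‖z ^ m * Δ_[1] ^[k] (fun v : ℝ ↦ (v : ℂ) ^ (-s)) (m + a)‖
      ≤ ‖Δ_[1] ^[k] (fun v : ℝ ↦ (v : ℂ) ^ (-s)) (m + a)‖ := by
        rw [norm_mul, norm_pow]
        exact mul_le_of_le_one_left (norm_nonneg _) (pow_le_one₀ (norm_nonneg z) hz)
    _ ≤ ‖(descPochhammer ℂ k).eval (-s)‖ * ((m : ℝ) + a) ^ (-(s.re + k)) := by
        rw [neg_add']
        simpa using norm_fwdDiff_iter_cpow_le zero_le_one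
          (show 0 < (m : ℝ) + a by positivity) hre
    _ ≤ _ := by
        rw [mul_assoc]
        gcongr
        exact rpow_neg_le_rpow_mul_rpow_neg ha (by simp) hps

theorem summable_pow_mul_fwdDiff_iter_cpow_neg (hz : ‖z‖ ≤ 1) (ha : 0 < a) {k : ℕ} {s : ℂ}
    (hs : 1 < s.re + k) :
    Summable fun m : ℕ ↦ z ^ m * Δ_[1] ^[k] (fun v : ℝ ↦ (v : ℂ) ^ (-s)) (m + a) :=
  .of_norm_bounded ((summable_nat_add_rpow_neg ha.le hs).mul_left _)
    (norm_pow_mul_fwdDiff_iter_cpow_neg_le hz ha (by linarith) le_rfl)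

theorem differentiableOn_fwdDiffSeries (hz : ‖z‖ ≤ 1) (ha : 0 < a) (k : ℕ) :
    DifferentiableOn ℂ (fwdDiffSeries z a k) {s | 1 - k < s.re} := by
  intro s₀ (hs₀ : 1 - k < s₀.re)
  obtain ⟨p, hp, hps₀⟩ : ∃ p, 1 < p ∧ p < s₀.re + k := exists_between (by linarith)
  have hU : IsOpen {s : ℂ | p - k < s.re} := isOpen_lt continuous_const Complex.continuous_re
  have hC : Continuous fun s : ℂ ↦
      ‖(descPochhammer ℂ k).eval (-s)‖ * a ^ (p - (s.re + k)) :=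
    (continuous_descPochhammer_eval.comp continuous_neg).norm.mul
      (continuous_const.rpow (by fun_prop) fun _ ↦ .inl ha.ne')
  have hdiff : DifferentiableOn ℂ (fwdDiffSeries z a k) {s | p - k < s.re} :=
    differentiableOn_tsum_of_norm_le_mul hU
      (fun m ↦ ((differentiable_fwdDiff_iter_cpow_neg k zero_le_one
        (by positivity)).const_mul _).differentiableOn)
      hC.continuousOn (summable_nat_add_rpow_neg ha.le hp) (fun m ↦ by positivity)
      fun m s (hs : p - k < s.re) ↦
        norm_pow_mul_fwdDiff_iter_cpow_neg_le hz ha (by linarith) (by linarith) m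
  exact (hdiff.differentiableAt (hU.mem_nhds (by
    simpa only [mem_ofPred_eq, sub_lt_iff_lt_add] using hps₀))).differentiableWithinAt

theorem one_sub_mul_fwdDiffSeries (hz : ‖z‖ ≤ 1) (ha : 0 < a) {k : ℕ} {s : ℂ}
    (hs : 1 < s.re + k) :
    (1 - z) * fwdDiffSeries z a k s =
      Δ_[1] ^[k] (fun v : ℝ ↦ (v : ℂ) ^ (-s)) a + z * fwdDiffSeries z a (k + 1) s := by
  simpa only [fwdDiffSeries, Function.iterate_succ_apply'] using
    one_sub_mul_tsum_pow_mul (summable_pow_mul_fwdDiff_iter_cpow_neg hz ha hs)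

theorem differentiableOn_abelContinuation (hz : ‖z‖ ≤ 1) (ha : 0 < a) (n : ℕ) :
    DifferentiableOn ℂ (abelContinuation z a n) {s | 1 - n < s.re} :=
  (Differentiable.fun_sum fun k _ ↦ (differentiable_fwdDiff_iter_cpow_neg k zero_le_one
    ha).const_mul _).differentiableOn.add ((differentiableOn_fwdDiffSeries hz ha n).const_mul _)

theorem abelContinuation_succ (hz : ‖z‖ ≤ 1) (hz1 : z ≠ 1) (ha : 0 < a) {n : ℕ} {s : ℂ}
    (hs : 1 < s.re + n) : abelContinuation z a (n + 1) s = abelContinuation z a n s := by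
  have hz1' : 1 - z ≠ 0 := sub_ne_zero.mpr hz1.symm
  have hparts : fwdDiffSeries z a n s = (1 - z)⁻¹ *
      (Δ_[1] ^[n] (fun v : ℝ ↦ (v : ℂ) ^ (-s)) a + z * fwdDiffSeries z a (n + 1) s) :=
    (eq_inv_mul_iff_mul_eq₀ hz1').mpr (one_sub_mul_fwdDiffSeries hz ha hs)
  rw [abelContinuation, abelContinuation, Finset.sum_range_succ, hparts, add_assoc,
    div_pow, div_pow]
  congr 1
  field_simp
  ring

theorem exists_differentiable_eq_tsum_pow_mul_cpow_neg (hz : ‖z‖ ≤ 1) (hz1 : z ≠ 1)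
    (ha : 0 < a) :
    ∃ F : ℂ → ℂ, Differentiable ℂ F ∧
      ∀ s : ℂ, 1 < s.re → F s = ∑' m : ℕ, z ^ m * ((m : ℂ) + a) ^ (-s) := by
  obtain ⟨F, hF, hFeq⟩ := exists_differentiable_forall_eqOn (f := abelContinuation z a)
    (U := fun n ↦ {s : ℂ | 1 - n < s.re})
    (fun n ↦ isOpen_lt continuous_const Complex.continuous_re)
    (fun m n hmn s (hs : 1 - m < s.re) ↦ show 1 - n < s.re from
      (sub_le_sub_left (Nat.cast_le.mpr hmn) 1).trans_lt hs)
    (fun s ↦ (exists_nat_gt (1 - s.re)).imp fun n hn ↦ sub_lt_comm.mp hn)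
    (differentiableOn_abelContinuation hz ha)
    (fun n s hs ↦ abelContinuation_succ hz hz1 ha (sub_lt_iff_lt_add.mp hs))
  refine ⟨F, hF, fun s hs ↦ ?_⟩
  simpa [abelContinuation, fwdDiffSeries] using hFeq 0 (show 1 - ((0 : ℕ) : ℝ) < s.re by simpa)

end Continuation

theorem exp_two_pi_I_mul_eq_one_iff {x : ℝ} :
    Complex.exp (2 * Real.pi * Complex.I * x) = 1 ↔ ∃ n : ℤ, x = n := by
  rw [Complex.exp_eq_one_iff]
  refine exists_congr fun n ↦ ?_
  rw [mul_comm (n : ℂ), mul_right_inj' Complex.two_pi_I_ne_zero]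
  norm_cast

theorem norm_exp_two_pi_I_mul (x : ℝ) : ‖Complex.exp (2 * Real.pi * Complex.I * x)‖ = 1 := by
  simp [Complex.norm_exp]

theorem lerchSeries_eq_tsum_pow_mul_cpow_neg (lam alp : ℝ) (s : ℂ) :
    lerchSeries lam alp s = ∑' m : ℕ,
      Complex.exp (2 * Real.pi * Complex.I * lam) ^ m * ((m : ℂ) + alp) ^ (-s) := by
  refine tsum_congr fun m ↦ ?_
  rw [← Complex.exp_nat_mul, Complex.cpow_neg, div_eq_mul_inv, mul_comm (m : ℂ)]

theorem lerchSeries_eq_add_lerchSeries_add_one (lam : ℝ) {alp : ℝ} (halp : 0 < alp) {s : ℂ}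
    (hs : 1 < s.re) :
    lerchSeries lam alp s = (alp : ℂ) ^ (-s) +
      Complex.exp (2 * Real.pi * Complex.I * lam) * lerchSeries lam (alp + 1) s := by
  simp only [lerchSeries_eq_tsum_pow_mul_cpow_neg]
  set z := Complex.exp (2 * Real.pi * Complex.I * lam)
  have hsum : Summable fun m : ℕ ↦ z ^ m * ((m : ℂ) + alp) ^ (-s) := by
    simpa using summable_pow_mul_fwdDiff_iter_cpow_neg (k := 0)
      (norm_exp_two_pi_I_mul lam).le halp (by simpa using hs)
  rw [hsum.tsum_eq_zero_add, ← tsum_mul_left]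
  congr 1
  · simp
  · refine tsum_congr fun m ↦ ?_
    push_cast
    rw [pow_succ', mul_assoc, add_assoc, add_comm (1 : ℂ)]

theorem IsLerch.add_one {lam alp : ℝ} {F : ℂ → ℂ} (hF : IsLerch lam alp F) (halp : 0 < alp) :
    IsLerch lam (alp + 1) fun s ↦
      (F s - (alp : ℂ) ^ (-s)) / Complex.exp (2 * Real.pi * Complex.I * lam) := by
  refine ⟨fun s hs ↦ ((hF.1 s hs).sub ?_).div_const _, fun s hs ↦ ?_⟩
  · exact differentiableAt_id.neg.const_cpow (.inl (Complex.ofReal_ne_zero.mpr halp.ne'))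
  · simp only [hF.2 s hs, lerchSeries_eq_add_lerchSeries_add_one lam halp hs, add_sub_cancel_left,
      ne_eq, Complex.exp_ne_zero, not_false_eq_true, mul_div_cancel_left₀]

theorem IsLerch.eqOn {lam alp : ℝ} {F G : ℂ → ℂ} (hF : IsLerch lam alp F)
    (hG : IsLerch lam alp G) : EqOn F G {1}ᶜ := by
  have hanalytic {H : ℂ → ℂ} (hH : IsLerch lam alp H) : AnalyticOnNhd ℂ H {1}ᶜ :=
    DifferentiableOn.analyticOnNhd (fun s hs ↦ (hH.1 s hs).differentiableWithinAt)
      isOpen_compl_singleton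
  have hconn : IsPreconnected ({1}ᶜ : Set ℂ) :=
    (isConnected_compl_singleton_of_one_lt_rank (by simp) 1).isPreconnected
  have hnhds : {s : ℂ | 1 < s.re} ∈ nhds 2 :=
    (isOpen_lt continuous_const Complex.continuous_re).mem_nhds (by simp)
  refine (hanalytic hF).eqOn_of_preconnected_of_eventuallyEq (hanalytic hG) hconn
    (z₀ := 2) (by simp) ?_
  filter_upwards [hnhds] with s hs
  rw [hF.2 s hs, hG.2 s hs]

theorem isLerch_hurwitzZeta (n : ℤ) {alp : ℝ} (halp : alp ∈ Icc 0 1) :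
    IsLerch n alp (HurwitzZeta.hurwitzZeta alp) := by
  refine ⟨fun s hs ↦ HurwitzZeta.differentiableAt_hurwitzZeta _ hs, fun s hs ↦ ?_⟩
  have hexp : Complex.exp (2 * Real.pi * Complex.I * (n : ℝ)) = 1 :=
    exp_two_pi_I_mul_eq_one_iff.mpr ⟨n, rfl⟩
  rw [← (HurwitzZeta.hasSum_hurwitzZeta_of_one_lt_re halp hs).tsum_eq,
    lerchSeries_eq_tsum_pow_mul_cpow_neg]
  simp only [hexp, one_pow, one_mul, Complex.cpow_neg, one_div]

theorem exists_isLerch_intCast (n : ℤ) {alp : ℝ} (halp : 0 < alp) : ∃ F, IsLerch n alp F := by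
  obtain ⟨N, hN⟩ := exists_nat_ge alp
  induction N generalizing alp with
  | zero => exact absurd hN (by simpa using halp)
  | succ N ih =>
    obtain h | h := le_or_gt alp 1
    · exact ⟨_, isLerch_hurwitzZeta n ⟨halp.le, h⟩⟩
    · obtain ⟨F, hF⟩ := ih (alp := alp - 1) (by linarith) (by push_cast at hN; linarith)
      exact ⟨_, by simpa using hF.add_one (by linarith)⟩

theorem exists_differentiable_isLerch {lam alp : ℝ} (hlam : ∀ n : ℤ, lam ≠ n) (halp : 0 < alp) :
    ∃ F : ℂ → ℂ, Differentiable ℂ F ∧ IsLerch lam alp F := by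
  have hexp : Complex.exp (2 * Real.pi * Complex.I * lam) ≠ 1 := fun h ↦
    (exp_two_pi_I_mul_eq_one_iff.mp h).elim hlam
  obtain ⟨F, hF, hFs⟩ :=
    exists_differentiable_eq_tsum_pow_mul_cpow_neg (norm_exp_two_pi_I_mul lam).le hexp halp
  refine ⟨F, hF, fun s _ ↦ hF s, fun s hs ↦ ?_⟩
  rw [hFs s hs, lerchSeries_eq_tsum_pow_mul_cpow_neg]

theorem lerch_exists_unique_general (lam alp : ℝ) (halp : 0 < alp) :
    (∃ F : ℂ → ℂ, IsLerch lam alp F) ∧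
      (∀ F G : ℂ → ℂ, IsLerch lam alp F → IsLerch lam alp G → ∀ s : ℂ, s ≠ 1 → F s = G s) ∧
      ((∀ n : ℤ, lam ≠ n) → ∃ F : ℂ → ℂ, Differentiable ℂ F ∧ IsLerch lam alp F) := by
  refine ⟨?_, fun F G hF hG s hs ↦ hF.eqOn hG hs, fun h ↦ exists_differentiable_isLerch h halp⟩
  by_cases h : ∃ n : ℤ, lam = n
  · obtain ⟨n, rfl⟩ := h
    exact exists_isLerch_intCast n halp
  · obtain ⟨F, -, hF⟩ := exists_differentiable_isLerch (not_exists.mp h) halp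
    exact ⟨F, hF⟩

/-- existence and uniqueness of the analytic continuation of the Lerch
zeta-function; for `0 < λ < 1` the continuation is entire. -/
theorem lerch_exists_unique (lam alp : ℝ) (hlam0 : 0 < lam) (hlam1 : lam ≤ 1)
    (halp0 : 0 < alp) (halp1 : alp ≤ 1) :
    (∃ F : ℂ → ℂ, IsLerch lam alp F) ∧
      (∀ F G : ℂ → ℂ, IsLerch lam alp F → IsLerch lam alp G → ∀ s : ℂ, s ≠ 1 → F s = G s) ∧
      (lam < 1 → ∃ F : ℂ → ℂ, Differentiable ℂ F ∧ IsLerch lam alp F) := by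
  obtain ⟨hexists, hunique, hentire⟩ := lerch_exists_unique_general lam alp halp0
  refine ⟨hexists, hunique, fun hlam ↦ hentire fun n hn ↦ ?_⟩
  obtain ⟨hn0, hn1⟩ : 0 < n ∧ n < 1 := by exact_mod_cast hn ▸ And.intro hlam0 hlam
  lia
end

section
/- A non-real complex number ρ is a zero of L(1/2, 1/2, ·) if and only if 1 − conj(ρ) is a zero of L(1/2, 1/2, ·), where conj denotes complex conjugation. -/
open scoped Classical

/-!
`L(1/2, 1/2, s) = ∑ (-1)^m / (m + 1/2)^s` can be summed in two ways. Read as a sum over odd integers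
`2 * m + 1`, it is `2^s` times the sine zeta function at `1/4`; grouped by the parity of `m`, it is
`2 * 2^(-s)` times the odd Hurwitz zeta function at `1/4`. The functional equation exchanges these
two functions under `s ↦ 1 - s`, so `L(1/2, 1/2, 1 - s)` is an elementary factor times
`L(1/2, 1/2, s)`, and this factor can vanish or blow up only at integers. Since the coefficients are
real, `L(1/2, 1/2, ·)` commutes with complex conjugation, which turns `1 - ρ` into `1 - conj ρ`.
-/

section Lerch

open Complex HurwitzZeta
open scoped ComplexConjugate Real

variable {F G : ℂ → ℂ} {lam alp : ℝ} {s : ℂ}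

lemma ofReal_two_mul_cpow {x : ℝ} (hx : 0 ≤ x) (s : ℂ) :
    ((2 * x : ℝ) : ℂ) ^ s = 2 ^ s * (x : ℂ) ^ s := by
  rw [ofReal_mul, mul_cpow_ofReal_nonneg zero_le_two hx, ofReal_ofNat]

lemma two_cpow_ne_zero (s : ℂ) : (2 : ℂ) ^ s ≠ 0 :=
  cpow_ne_zero_iff.mpr (Or.inl two_ne_zero)

lemma differentiable_two_cpow : Differentiable ℂ fun s : ℂ ↦ (2 : ℂ) ^ s :=
  differentiable_id.const_cpow (Or.inl two_ne_zero)

lemma exp_two_pi_I_half_mul_nat (m : ℕ) : exp (2 * π * I * (1 / 2 : ℝ) * m) = (-1) ^ m := by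
  rw [← exp_pi_mul_I, ← exp_nat_mul]
  congr 1
  push_cast
  ring

lemma sin_two_pi_mul_quarter_mul_even (k : ℕ) : Real.sin (2 * π * (1 / 4) * (2 * k : ℕ)) = 0 := by
  rw [← Real.sin_nat_mul_pi k]
  congr 1
  push_cast
  ring

lemma sin_two_pi_mul_quarter_mul_odd (k : ℕ) :
    Real.sin (2 * π * (1 / 4) * (2 * k + 1 : ℕ)) = (-1) ^ k := by
  have hangle : 2 * π * (1 / 4) * (2 * k + 1 : ℕ) = π / 2 + k * π := by
    push_cast
    ring
  rw [hangle, Real.sin_add_nat_mul_pi, Real.sin_pi_div_two, mul_one]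

lemma lerchSeries_one_half (alp : ℝ) (s : ℂ) :
    lerchSeries (1 / 2) alp s = ∑' m : ℕ, (-1) ^ m / ((m : ℂ) + alp) ^ s := by
  simp only [lerchSeries, exp_two_pi_I_half_mul_nat]

lemma lerchSeries_add_one (lam alp : ℝ) (s : ℂ) :
    lerchSeries (lam + 1) alp s = lerchSeries lam alp s := by
  refine tsum_congr fun m ↦ ?_
  have hexp : 2 * π * I * (lam + 1 : ℝ) * m = 2 * π * I * lam * m + m * (2 * π * I) := by
    push_cast
    ring
  rw [hexp, exp_add, exp_nat_mul_two_pi_mul_I, mul_one]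

lemma lerchSeries_conj (lam : ℝ) (halp : 0 ≤ alp) (s : ℂ) :
    lerchSeries lam alp (conj s) = conj (lerchSeries (-lam) alp s) := by
  rw [lerchSeries, lerchSeries, conj_tsum]
  refine tsum_congr fun m ↦ ?_
  have hphase : conj (2 * π * I * (-lam : ℝ) * m) = 2 * π * I * lam * m := by
    simp only [map_mul, map_neg, conj_ofReal, conj_I, conj_ofNat, conj_natCast, ofReal_neg]
    ring
  have hbase : (m : ℂ) + alp = ((m + alp : ℝ) : ℂ) := by push_cast; rfl
  have harg : (((m + alp : ℝ) : ℂ)).arg ≠ π := by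
    rw [arg_ofReal_of_nonneg (by positivity)]
    exact Real.pi_pos.ne
  rw [hbase, cpow_conj _ _ harg, conj_ofReal, map_div₀, ← exp_conj, hphase]

lemma hasSum_alternating_hurwitzZeta (halp : alp ∈ Set.Icc 0 1) (hs : 1 < s.re) :
    HasSum (fun m : ℕ ↦ (-1) ^ m / ((m : ℂ) + alp) ^ s)
      ((2 ^ s)⁻¹ * (hurwitzZeta (alp / 2 : ℝ) s - hurwitzZeta ((alp + 1) / 2 : ℝ) s)) := by
  obtain ⟨halp₀, halp₁⟩ := halp
  have heven := (hasSum_hurwitzZeta_of_one_lt_re (a := alp / 2)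
    ⟨by linarith, by linarith⟩ hs).mul_left (2 ^ s)⁻¹
  have hodd := (hasSum_hurwitzZeta_of_one_lt_re (a := (alp + 1) / 2)
    ⟨by linarith, by linarith⟩ hs).mul_left (-(2 ^ s)⁻¹)
  rw [mul_sub, sub_eq_add_neg, ← neg_mul]
  refine HasSum.even_add_odd (heven.congr_fun fun k ↦ ?_) (hodd.congr_fun fun k ↦ ?_)
  · have hbase : ((2 * k : ℕ) : ℂ) + alp = ((2 * (k + alp / 2) : ℝ) : ℂ) := by
      push_cast
      ring
    rw [hbase, ofReal_two_mul_cpow (by positivity), (even_two_mul k).neg_one_pow]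
    push_cast
    rw [one_div, mul_inv, one_div]
  · have hbase : ((2 * k + 1 : ℕ) : ℂ) + alp = ((2 * (k + (alp + 1) / 2) : ℝ) : ℂ) := by
      push_cast
      ring
    rw [hbase, ofReal_two_mul_cpow (by positivity), (odd_two_mul_add_one k).neg_one_pow]
    push_cast
    rw [neg_div, one_div, mul_inv, one_div, neg_mul]

lemma hasSum_alternating_sinZeta (hs : 1 < s.re) :
    HasSum (fun m : ℕ ↦ (-1) ^ m / ((m : ℂ) + (1 / 2 : ℝ)) ^ s)
      (2 ^ s * sinZeta (1 / 4 : ℝ) s) := by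
  have hinj : Function.Injective fun k : ℕ ↦ 2 * k + 1 := fun _ _ h ↦ by
    simpa using h
  have hodd : HasSum (fun k : ℕ ↦
      (Real.sin (2 * π * (1 / 4) * (2 * k + 1 : ℕ)) : ℂ) / ((2 * k + 1 : ℕ) : ℂ) ^ s)
      (sinZeta (1 / 4 : ℝ) s) := by
    refine (hinj.hasSum_iff fun n hn ↦ ?_).mpr (hasSum_nat_sinZeta (1 / 4) hs)
    obtain ⟨k, rfl | rfl⟩ := n.even_or_odd'
    · rw [sin_two_pi_mul_quarter_mul_even, ofReal_zero, zero_div]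
    · exact absurd ⟨k, rfl⟩ hn
  refine (hodd.mul_left (2 ^ s)).congr_fun fun k ↦ ?_
  have hbase : ((2 * k + 1 : ℕ) : ℂ) = ((2 * (k + 1 / 2) : ℝ) : ℂ) := by
    push_cast
    ring
  rw [sin_two_pi_mul_quarter_mul_odd, hbase, ofReal_two_mul_cpow (by positivity), ← mul_div_assoc,
    mul_div_mul_left _ _ (two_cpow_ne_zero s)]
  push_cast
  rfl

lemma hurwitzZeta_sub_hurwitzZeta_one_sub (a : ℝ) (s : ℂ) :
    hurwitzZeta a s - hurwitzZeta (1 - a : ℝ) s = 2 * hurwitzZetaOdd a s := by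
  have hneg : ((1 - a : ℝ) : UnitAddCircle) = -(a : UnitAddCircle) := by
    rw [AddCircle.coe_sub, AddCircle.coe_period, zero_sub]
  rw [hneg, hurwitzZetaOdd_eq]
  ring

lemma eqOn_compl_singleton_one_of_eqOn_one_lt_re (hF : DifferentiableOn ℂ F {1}ᶜ)
    (hG : DifferentiableOn ℂ G {1}ᶜ) (h : Set.EqOn F G {s | 1 < s.re}) :
    Set.EqOn F G {1}ᶜ := by
  have hhalf : {s : ℂ | 1 < s.re} ∈ nhds 2 :=
    (isOpen_lt continuous_const continuous_re).mem_nhds (by simp)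
  exact (hF.analyticOnNhd isOpen_compl_singleton).eqOn_of_preconnected_of_eventuallyEq
    (hG.analyticOnNhd isOpen_compl_singleton)
    (isConnected_compl_singleton_of_one_lt_rank (by simp) 1).isPreconnected
    (z₀ := 2) (by simp) (Filter.eventuallyEq_of_mem hhalf h)

namespace IsLerch

lemma eqOn_s19 (hF : IsLerch lam alp F) (hG : IsLerch lam alp G) : Set.EqOn F G {1}ᶜ :=
  eqOn_compl_singleton_one_of_eqOn_one_lt_re
    (fun s hs ↦ (hF.1 s hs).differentiableWithinAt) (fun s hs ↦ (hG.1 s hs).differentiableWithinAt)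
    fun s hs ↦ (hF.2 s hs).trans (hG.2 s hs).symm

lemma add_one_s19 (hF : IsLerch lam alp F) : IsLerch (lam + 1) alp F :=
  ⟨hF.1, fun s hs ↦ (hF.2 s hs).trans (lerchSeries_add_one lam alp s).symm⟩

lemma conj_comp_conj (halp : 0 ≤ alp) (hF : IsLerch lam alp F) :
    IsLerch (-lam) alp (conj ∘ F ∘ conj) := by
  refine ⟨fun s hs ↦ ?_, fun s hs ↦ ?_⟩
  · have hs' : conj s ≠ 1 := fun h ↦ hs (by simpa using congrArg conj h)
    simpa only [conj_conj] using (hF.1 (conj s) hs').conj_conj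
  · have hseries : F (conj s) = lerchSeries lam alp (conj s) := hF.2 _ (by simpa using hs)
    rw [Function.comp_apply, Function.comp_apply, hseries, lerchSeries_conj lam halp, conj_conj]

lemma apply_conj (halp : 0 ≤ alp) (hF : IsLerch (1 / 2) alp F) (hs : s ≠ 1) :
    F (conj s) = conj (F s) := by
  have hconj : IsLerch (1 / 2) alp (conj ∘ F ∘ conj) := by
    convert (hF.conj_comp_conj halp).add_one_s19 using 1
    norm_num
  have h : conj (F (conj s)) = F s := hconj.eqOn_s19 hF hs
  rw [← h, conj_conj]

lemma hurwitzZeta_sub (halp : alp ∈ Set.Icc 0 1) :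
    IsLerch (1 / 2) alp fun s ↦
      (2 ^ s)⁻¹ * (hurwitzZeta (alp / 2 : ℝ) s - hurwitzZeta ((alp + 1) / 2 : ℝ) s) := by
  refine ⟨fun s hs ↦ ?_, fun s hs ↦ ?_⟩
  · exact ((differentiable_two_cpow s).inv (two_cpow_ne_zero s)).mul
      ((differentiableAt_hurwitzZeta _ hs).sub (differentiableAt_hurwitzZeta _ hs))
  · rw [lerchSeries_one_half, (hasSum_alternating_hurwitzZeta halp hs).tsum_eq]

lemma hurwitzZetaOdd_quarter :
    IsLerch (1 / 2) (1 / 2) fun s ↦ (2 ^ s)⁻¹ * (2 * hurwitzZetaOdd (1 / 4 : ℝ) s) := by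
  convert! hurwitzZeta_sub (alp := 1 / 2) ⟨by norm_num, by norm_num⟩ using 3 with s
  rw [← hurwitzZeta_sub_hurwitzZeta_one_sub]
  norm_num

lemma sinZeta_quarter : IsLerch (1 / 2) (1 / 2) fun s ↦ 2 ^ s * sinZeta (1 / 4 : ℝ) s := by
  refine ⟨fun s _ ↦ ?_, fun s hs ↦ ?_⟩
  · exact (differentiable_two_cpow s).mul (differentiableAt_sinZeta _ s)
  · rw [lerchSeries_one_half, (hasSum_alternating_sinZeta hs).tsum_eq]

theorem one_sub (hF : IsLerch (1 / 2) (1 / 2) F) (hs : ∀ n : ℕ, s ≠ -n) (hs₁ : s ≠ 1) :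
    F (1 - s) = 2 * (2 * π) ^ (-s) * Gamma s * sin (π * s / 2) * F s := by
  have hs₀ : 1 - s ≠ 1 := fun h ↦ hs 0 (by simpa using h)
  have hpow : ((2 : ℂ) ^ (1 - s))⁻¹ * 2 = 2 ^ s := by
    rw [cpow_sub _ _ two_ne_zero, cpow_one, inv_div, div_mul_cancel₀ _ two_ne_zero]
  calc F (1 - s) = (2 ^ (1 - s))⁻¹ * (2 * hurwitzZetaOdd (1 / 4 : ℝ) (1 - s)) :=
        hF.eqOn_s19 hurwitzZetaOdd_quarter hs₀
    _ = 2 ^ s * (2 * (2 * π) ^ (-s) * Gamma s * sin (π * s / 2) * sinZeta (1 / 4 : ℝ) s) := by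
        rw [← mul_assoc, hpow, hurwitzZetaOdd_one_sub _ hs]
    _ = 2 * (2 * π) ^ (-s) * Gamma s * sin (π * s / 2) * (2 ^ s * sinZeta (1 / 4 : ℝ) s) := by
        ring
    _ = 2 * (2 * π) ^ (-s) * Gamma s * sin (π * s / 2) * F s := by
        rw [hF.eqOn_s19 sinZeta_quarter hs₁]

end IsLerch

lemma sin_pi_mul_div_two_ne_zero (hs : ∀ k : ℤ, s ≠ 2 * k) : sin (π * s / 2) ≠ 0 := by
  rw [Ne, sin_eq_zero_iff]
  rintro ⟨k, hk⟩
  have hpi : (π : ℂ) ≠ 0 := ofReal_ne_zero.mpr Real.pi_ne_zero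
  exact hs k (mul_left_cancel₀ hpi (by linear_combination 2 * hk))

theorem lerch_half_half_zeros_symmetric_general (hF : IsLerch (1 / 2) (1 / 2) F) {ρ : ℂ}
    (hρ : ∀ n : ℤ, ρ ≠ n) : F ρ = 0 ↔ F (1 - conj ρ) = 0 := by
  have hρ₁ : ρ ≠ 1 := mod_cast hρ 1
  have hρ' : ∀ n : ℕ, ρ ≠ -n := fun n ↦ mod_cast hρ (-n)
  have hpow : (2 * π : ℂ) ^ (-ρ) ≠ 0 :=
    cpow_ne_zero_iff.mpr (Or.inl (mod_cast Real.two_pi_pos.ne'))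
  have hsin : sin (π * ρ / 2) ≠ 0 := sin_pi_mul_div_two_ne_zero fun k ↦ mod_cast hρ (2 * k)
  have hone_sub : 1 - ρ ≠ 1 := fun h ↦ hρ 0 (by simpa using h)
  have hreflect : F (1 - conj ρ) = conj (F (1 - ρ)) := by
    rw [← hF.apply_conj one_half_pos.le hone_sub, map_sub, map_one]
  rw [hreflect, map_eq_zero, hF.one_sub hρ' hρ₁]
  simp only [mul_eq_zero, two_ne_zero, hpow, Gamma_ne_zero hρ', hsin, false_or]

end Lerch

/-- the non-real zeros of `L(1/2, 1/2, ·)` are symmetric with respect to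
the critical line. -/
theorem lerch_half_half_zeros_symmetric (F : ℂ → ℂ) (hF : IsLerch (1 / 2) (1 / 2) F) :
    ∀ ρ : ℂ, ρ.im ≠ 0 → (F ρ = 0 ↔ F (1 - (starRingEnd ℂ) ρ) = 0) := by
  intro ρ hρ
  exact lerch_half_half_zeros_symmetric_general hF fun n h ↦ hρ (by rw [h, Complex.intCast_im])
end
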